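/- Let t ≥ m ≥ 1 be integers, let q ∈ ℂ with 0 < |q| < 1, and let x ∈ ℂ with x ≠ 0 and x·q^n ≠ 1 for every nonzero integer n. Then q^{-t} Σ_{k_t ≥ … ≥ k_1 ≥ 0, k_m ≥ 1} (xq;q)_{k_t-1} (q/x;q)_{k_t-1} q^{k_t} Π_{i=1}^{t-1} q^{k_i^2} [ k_{i+1} - k_i - i + Σ_{j=1}^{i} (2 k_j + χ(m > j)) choose k_{i+1} - k_i ]_q = -q^{-t/2 - m/2 + 3/8} · ((xq;q)_∞ (q/x;q)_∞ / ((q;q)_∞)^2) · ( Σ_{r,s ≥ 0, r ≢ s (mod 2)} - Σ_{r,s < 0, r ≢ s (mod 2)} ) (-1)^{(r-s-1)/2} q^{r^2/8 + (4t+3)rs/4 + s^2/8 + (1+m+t)r/2 + (1-m+t)s/2} / (1 - x q^{(r+s+1)/2}), where each of the series converges absolutely. Note that for integers r ≢ s (mod 2), the quantities (r-s-1)/2 and (r+s+1)/2 are integers, and the total exponent of q in each term (including the prefactor exponent -t/2 - m/2 + 3/8) is an integer. -/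

import Mathlib

open Finset

/-- The finite q-Pochhammer symbol `(a;q)_n`. -/
noncomputable def qPoch (q a : ℂ) (n : ℕ) : ℂ := ∏ j ∈ Finset.range n, (1 - a * q ^ j)

/-- The infinite q-Pochhammer symbol `(a;q)_∞`. -/
noncomputable def qPochInf (q a : ℂ) : ℂ := ∏' j : ℕ, (1 - a * q ^ j)

/-- The Gaussian binomial coefficient `[n choose k]_q`, zero outside `0 ≤ k ≤ n`. -/
noncomputable def qBinom (q : ℂ) (n k : ℤ) : ℂ :=
  if 0 ≤ k ∧ k ≤ n then
    ∏ j ∈ Finset.range k.toNat, (1 - q ^ (n - k + (j : ℤ) + 1)) / (1 - q ^ ((j : ℤ) + 1))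
  else 0

/-- The product
`Π_{i=1}^{T-1} q^{k_i²} [k_{i+1} - k_i - i + Σ_{j=1}^{i}(2k_j + χ(M>j)) choose k_{i+1}-k_i]_q`
of the vector-valued U-function, for tuples of length `t+1`; the paper's `t, m`
are `t+1, m+1`, so `χ(M > j)` (paper `j`) becomes `χ(j < m)` for 0-based `j`. -/
noncomputable def UtProdM (q : ℂ) (t m : ℕ) (K : Fin (t+1) → ℕ) : ℂ :=
  ∏ i : Fin t, (q ^ (K i.castSucc ^ 2) *
    qBinom q ((K i.succ : ℤ) - (K i.castSucc : ℤ) - ((i : ℕ) + 1)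
        + ∑ j ∈ Finset.univ.filter (fun j : Fin (t+1) => (j : ℕ) ≤ (i : ℕ)),
            (2 * (K j : ℤ) + if (j : ℕ) < m then 1 else 0))
      ((K i.succ : ℤ) - (K i.castSucc : ℤ)))

/-- The summand of the multisum defining `U_t^{(m)}(-x;q)`. -/
noncomputable def UtTermM (q x : ℂ) (t m : ℕ) (K : Fin (t+1) → ℕ) : ℂ :=
  qPoch q (x * q) (K (Fin.last t) - 1) * qPoch q (q / x) (K (Fin.last t) - 1) *
    q ^ (K (Fin.last t)) * UtProdM q t m K

/-- The Hecke-type summand `(-1)^{(r-s-1)/2} q^{E} / (1 - x q^{(r+s+1)/2})` where the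
integer exponent `E = r²/8 + (4T+3)rs/4 + s²/8 + (1+M+T)r/2 + (1-M+T)s/2 - T/2 - M/2 + 3/8`
(the prefactor exponent `-T/2 - M/2 + 3/8` has been absorbed, making the total
exponent of `q` an integer, as noted in the statement); `T, M` are the paper's `t, m`. -/
noncomputable def heckeTermM (q x : ℂ) (T M : ℤ) (p : ℤ × ℤ) : ℂ :=
  (-1 : ℂ) ^ ((p.1 - p.2 - 1) / 2) *
    q ^ ((p.1 ^ 2 + p.2 ^ 2 + 2 * (4 * T + 3) * p.1 * p.2
          + 4 * (1 + M + T) * p.1 + 4 * (1 - M + T) * p.2 - 4 * T - 4 * M + 3) / 8) /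
    (1 - x * q ^ ((p.1 + p.2 + 1) / 2))

open Finset


noncomputable def ee (q : ℂ) (z : ℤ) : ℂ := if 0 ≤ z then (qPoch q q z.toNat)⁻¹ else 0

noncomputable def GG (q : ℂ) (i s : ℕ) : ℂ := qPoch q (q ^ s) i * ee q i

lemma one_sub_qpow_ne {q : ℂ} (hq1 : ‖q‖ < 1) (n : ℕ) : 1 - q ^ (n + 1) ≠ 0 := by
  intro h
  have h1 : q ^ (n+1) = 1 := by linear_combination -h
  have h2 : ‖q‖ ^ (n+1) = 1 := by rw [← norm_pow, h1, norm_one]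
  have := pow_lt_one₀ (norm_nonneg q) hq1 (Nat.succ_ne_zero n)
  rw [Nat.succ_eq_add_one] at this
  linarith

lemma one_sub_qmul_ne {q : ℂ} (hq1 : ‖q‖ < 1) (n : ℕ) : 1 - q * q ^ n ≠ 0 := by
  have := one_sub_qpow_ne hq1 n
  rwa [pow_succ'] at this

lemma qPoch_qq_ne {q : ℂ} (hq1 : ‖q‖ < 1) (n : ℕ) : qPoch q q n ≠ 0 := by
  unfold qPoch
  rw [Finset.prod_ne_zero_iff]
  intro j _
  exact one_sub_qmul_ne hq1 j

lemma ee_neg (q : ℂ) {z : ℤ} (h : z < 0) : ee q z = 0 := by simp [ee, h]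

lemma ee_zero (q : ℂ) : ee q 0 = 1 := by simp [ee, qPoch]

lemma ee_nat (q : ℂ) (n : ℕ) : ee q n = (qPoch q q n)⁻¹ := by simp [ee]

lemma ee_rec {q : ℂ} (hq1 : ‖q‖ < 1) (z : ℤ) : ee q (z - 1) = (1 - q ^ z) * ee q z := by
  rcases lt_trichotomy z 0 with h | h | h
  · rw [ee_neg q h, ee_neg q (by omega)]; simp
  · subst h; rw [ee_neg q (by omega)]; simp
  · obtain ⟨n, rfl⟩ : ∃ n : ℕ, z = n + 1 := ⟨(z-1).toNat, by omega⟩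
    have : ((n:ℤ) + 1) = ((n+1 : ℕ) : ℤ) := by push_cast; rfl
    rw [add_sub_cancel_right, this, ee_nat, ee_nat, zpow_natCast]
    have h1 := one_sub_qmul_ne hq1 n
    have h2 := qPoch_qq_ne hq1 n
    have h3 : qPoch q q (n+1) = qPoch q q n * (1 - q * q^n) := by
      simp [qPoch, Finset.prod_range_succ]
    rw [h3, pow_succ']
    field_simp

lemma ee_rec_nat {q : ℂ} (hq1 : ‖q‖ < 1) (n : ℕ) :
    ee q n = (1 - q ^ (n+1)) * ee q ((n:ℤ)+1) := by
  have := ee_rec hq1 ((n:ℤ)+1)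
  rw [add_sub_cancel_right] at this
  rw [this]; norm_cast

lemma GG_zero (q : ℂ) (s : ℕ) : GG q 0 s = 1 := by simp [GG, qPoch, ee_zero]

lemma GG_succ_zero (q : ℂ) (i : ℕ) : GG q (i+1) 0 = 0 := by
  simp [GG, qPoch, Finset.prod_range_succ']

lemma GG_rec {q : ℂ} (hq1 : ‖q‖ < 1) (i p : ℕ) :
    GG q (i+1) (p+1) - q ^ p * GG q i (p+1) = GG q (i+1) p := by
  unfold GG
  rw [ee_rec_nat hq1 i]
  have h1 : qPoch q (q^(p+1)) (i+1) = qPoch q (q^(p+1)) i * (1 - q^(p+1) * q^i) := by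
    simp [qPoch, Finset.prod_range_succ]
  have h2 : qPoch q (q^p) (i+1) = qPoch q (q^(p+1)) i * (1 - q^p) := by
    simp only [qPoch, Finset.prod_range_succ', pow_zero, mul_one]
    congr 1
    apply Finset.prod_congr rfl
    intro j _; ring
  rw [h1, h2]; push_cast; ring

open PowerSeries in
noncomputable def EE (q : ℂ) : PowerSeries ℂ := PowerSeries.mk fun n => ee q n

noncomputable def PP (q : ℂ) (s : ℕ) : PowerSeries ℂ := PowerSeries.mk fun n => GG q n s

lemma PP_zero (q : ℂ) : PP q 0 = 1 := by
  ext n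
  rw [PP, PowerSeries.coeff_mk, PowerSeries.coeff_one]
  rcases n with _ | n
  · simp [GG_zero]
  · simp [GG_succ_zero]

lemma PP_rec {q : ℂ} (hq1 : ‖q‖ < 1) (p : ℕ) :
    PP q (p+1) * (1 - PowerSeries.C (q^p) * PowerSeries.X) = PP q p := by
  ext n
  rw [mul_sub, mul_one, map_sub, mul_comm (PP q (p+1)), mul_assoc, PowerSeries.coeff_C_mul]
  rcases n with _ | n
  · simp [PP, GG_zero]
  · rw [PowerSeries.coeff_succ_X_mul]
    simp only [PP, PowerSeries.coeff_mk]
    exact GG_rec hq1 n p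

lemma EE_rescale {q : ℂ} (hq1 : ‖q‖ < 1) (p : ℕ) :
    PowerSeries.rescale (q^(p+1)) (EE q) =
     (1 - PowerSeries.C (q^p) * PowerSeries.X) * PowerSeries.rescale (q^p) (EE q) := by
  ext n
  rw [sub_mul, one_mul, map_sub, mul_assoc, PowerSeries.coeff_C_mul]
  rcases n with _ | n
  · simp [EE]
  · rw [PowerSeries.coeff_succ_X_mul]
    simp only [EE, PowerSeries.coeff_rescale, PowerSeries.coeff_mk]
    rw [ee_rec_nat hq1 n]
    push_cast; ring

lemma PP_mul_EE {q : ℂ} (hq1 : ‖q‖ < 1) (p : ℕ) :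
    PP q p * PowerSeries.rescale (q^p) (EE q) = EE q := by
  induction p with
  | zero => rw [PP_zero, pow_zero, PowerSeries.rescale_one]; simp
  | succ p ih => rw [EE_rescale hq1, ← mul_assoc, PP_rec hq1, ih]

/-- diag q^(n^2 + ε n) -/
noncomputable def TT (q : ℂ) (ε : ℕ) (f : PowerSeries ℂ) : PowerSeries ℂ :=
  PowerSeries.mk fun n => q ^ (n^2 + ε * n) * PowerSeries.coeff n f

noncomputable def CC (q : ℂ) (ε : ℕ) (f : PowerSeries ℂ) : PowerSeries ℂ := EE q * TT q ε f

noncomputable def RR (q : ℂ) (s : ℕ) (f : PowerSeries ℂ) : PowerSeries ℂ :=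
  PP q s * PowerSeries.rescale (q^s) f

lemma RR_CC {q : ℂ} (hq1 : ‖q‖ < 1) (p ε : ℕ) (g : PowerSeries ℂ) :
    RR q p (CC q ε g) = EE q * PowerSeries.rescale (q^p) (TT q ε g) := by
  rw [RR, CC, map_mul, ← mul_assoc, PP_mul_EE hq1]

lemma coeff_X_pow_mul_ite (f : PowerSeries ℂ) (l n : ℕ) :
    PowerSeries.coeff n (PowerSeries.X ^ l * f) = if l ≤ n then PowerSeries.coeff (n - l) f else 0 :=
  PowerSeries.coeff_X_pow_mul' f l n

lemma TT_key (q : ℂ) (l s ε M N : ℕ) (hN : N ≤ M) (hs : ε ≤ 2 * l + s) (g : PowerSeries ℂ) :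
    PowerSeries.coeff N (TT q 0 (PowerSeries.X ^ l * RR q s g)) =
     ∑ k ∈ Finset.Icc l M, GG q (k - l) s * q ^ (k^2) *
       PowerSeries.coeff N (PowerSeries.X ^ k *
         PowerSeries.rescale (q^(2*k+s-ε)) (TT q ε g)) := by
  simp only [TT, PowerSeries.coeff_mk, coeff_X_pow_mul_ite, PowerSeries.coeff_rescale]
  simp only [RR, PowerSeries.coeff_mul, PP, PowerSeries.coeff_rescale, PowerSeries.coeff_mk]
  split_ifs with h
  · rw [Finset.mul_sum, Finset.Nat.sum_antidiagonal_eq_sum_range_succ_mk]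
    have h1 : Finset.Icc l M = (Finset.range (M - l + 1)).map (addLeftEmbedding l) := by
      ext k; simp only [Finset.mem_Icc, Finset.mem_map, Finset.mem_range, addLeftEmbedding_apply]
      constructor
      · intro hk; exact ⟨k - l, by omega, by omega⟩
      · rintro ⟨a, ha, rfl⟩; omega
    rw [h1, Finset.sum_map]
    have h2 : Finset.range (N - l).succ ⊆ Finset.range (M - l + 1) := by
      intro k; simp only [Finset.mem_range]; omega
    rw [← Finset.sum_subset h2]
    · apply Finset.sum_congr rfl
      intro d hd
      rw [Finset.mem_range] at hd
      simp only [addLeftEmbedding_apply]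
      rw [if_pos (by omega), Nat.add_sub_cancel_left]
      obtain ⟨j, rfl⟩ : ∃ j, N = l + d + j := ⟨N - (l+d), by omega⟩
      have e1 : l + d + j - l - d = j := by omega
      have e2 : l + d + j - (l + d) = j := by omega
      simp only [e1, e2]
      obtain ⟨p, hp⟩ : ∃ p, 2 * (l+d) + s = p + ε := ⟨2*(l+d)+s-ε, by omega⟩
      rw [hp, Nat.add_sub_cancel]
      have : q ^ ((l+d+j)^2 + 0 * (l+d+j)) * (q^s)^j = q^((l+d)^2) * ((q^p)^j * q^(j^2+ε*j)) := by
        simp only [← pow_mul, ← pow_add]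
        congr 1
        nlinarith [congrArg (· * j) hp]
      linear_combination (GG q d s * PowerSeries.coeff j g) * this
    · intro d hd hd'
      rw [Finset.mem_range] at hd hd'
      simp only [addLeftEmbedding_apply]
      rw [if_neg (by omega), mul_zero]
  · rw [mul_zero]; symm
    apply Finset.sum_eq_zero
    intro k hk
    rw [Finset.mem_Icc] at hk
    rw [if_neg (by omega), mul_zero]

lemma coeff_CC (q : ℂ) (ε n : ℕ) (g : PowerSeries ℂ) : PowerSeries.coeff n (CC q ε g) =
    ∑ k ∈ Finset.range (n+1), ee q ((n:ℤ) - k) * q ^ (k^2+ε*k) * PowerSeries.coeff k g := by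
  rw [CC, mul_comm, PowerSeries.coeff_mul, Finset.Nat.sum_antidiagonal_eq_sum_range_succ_mk]
  apply Finset.sum_congr rfl
  intro k hk
  rw [Finset.mem_range] at hk
  simp only [EE, TT, PowerSeries.coeff_mk]
  rw [Nat.cast_sub (by omega)]; ring

lemma CC_key {q : ℂ} (hq1 : ‖q‖ < 1) (l s ε M n : ℕ) (hn : n ≤ M) (hs : ε ≤ 2 * l + s)
    (g : PowerSeries ℂ) :
    PowerSeries.coeff n (CC q 0 (PowerSeries.X ^ l * RR q s g)) =
     ∑ k ∈ Finset.Icc l M, GG q (k - l) s * q ^ (k^2) *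
       PowerSeries.coeff n (PowerSeries.X ^ k * RR q (2*k+s-ε) (CC q ε g)) := by
  have h2 : ∀ k, PowerSeries.X ^ k * RR q (2*k+s-ε) (CC q ε g) =
      EE q * (PowerSeries.X ^ k * PowerSeries.rescale (q^(2*k+s-ε)) (TT q ε g)) := by
    intro k; rw [RR_CC hq1]; ring
  simp only [h2]
  rw [CC, PowerSeries.coeff_mul]
  simp only [PowerSeries.coeff_mul n (EE q), Finset.mul_sum]
  rw [Finset.sum_comm]
  apply Finset.sum_congr rfl
  intro x hx
  rw [Finset.HasAntidiagonal.mem_antidiagonal] at hx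
  rw [TT_key q l s ε M x.2 (by omega) hs, Finset.mul_sum]
  apply Finset.sum_congr rfl
  intro k _
  ring


def ss (m i S : ℕ) : ℕ := 2 * S + 1 - (i - m)

noncomputable def WW (q : ℂ) (m M : ℕ) : ℕ → (ℕ → ℕ → ℂ) → ℂ
  | 0, h => h 0 0
  | (i+1), h => WW q m M i (fun l S =>
      ∑ k ∈ (Finset.Icc l M).filter (fun k => i = m → 1 ≤ k),
        GG q (k - l) (ss m i S) * q ^ (k^2) * h k (S + k))

lemma WW_sum (q : ℂ) (m M i : ℕ) {A : Type*} (a : Finset A) (c : A → ℂ) (h : A → ℕ → ℕ → ℂ) :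
    WW q m M i (fun l S => ∑ x ∈ a, c x * h x l S) = ∑ x ∈ a, c x * WW q m M i (h x) := by
  induction i generalizing h with
  | zero => rfl
  | succ i ih =>
    simp only [WW]
    rw [← ih]
    congr 1
    ext l S
    simp only [Finset.mul_sum]
    rw [Finset.sum_comm]
    apply Finset.sum_congr rfl; intro x _
    apply Finset.sum_congr rfl; intro y _
    ring

lemma WW_sub (q : ℂ) (m M i : ℕ) (h h' : ℕ → ℕ → ℂ) :
    WW q m M i (fun l S => h l S - h' l S) = WW q m M i h - WW q m M i h' := by
  induction i generalizing h h' with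
  | zero => rfl
  | succ i ih =>
    simp only [WW]
    rw [← ih]
    congr 1
    ext l S
    rw [← Finset.sum_sub_distrib]
    apply Finset.sum_congr rfl; intro x _
    ring

lemma WW_congr (q : ℂ) (m M i : ℕ) (h h' : ℕ → ℕ → ℂ)
    (H : ∀ l S, (m < i → i - m ≤ S ∧ 1 ≤ l) → h l S = h' l S) :
    WW q m M i h = WW q m M i h' := by
  induction i generalizing h h' with
  | zero => exact H 0 0 (by omega)
  | succ i ih =>
    simp only [WW]
    apply ih
    intro l S hlS
    apply Finset.sum_congr rfl
    intro k hk
    rw [Finset.mem_filter, Finset.mem_Icc] at hk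
    rw [H k (S+k)]
    intro hm
    rcases Nat.lt_or_ge m i with h1 | h1
    · have := hlS h1; omega
    · have := hk.2 (by omega); omega

lemma WW_single (q : ℂ) (m M i : ℕ) (hi : i ≤ m) (u : ℕ → ℂ) :
    WW q m M i (fun l S => if l = 0 then u S else 0) = u 0 := by
  induction i with
  | zero => simp [WW]
  | succ i ih =>
    simp only [WW]
    rw [← ih (by omega)]
    congr 1
    ext l S
    by_cases hl : l = 0
    · subst hl
      rw [Finset.sum_eq_single 0]
      · simp [GG_zero]
      · intro k _ hk; simp [hk]
      · intro hk; exfalso; apply hk; simp; omega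
    · rw [if_neg hl]
      apply Finset.sum_eq_zero
      intro k hk
      rw [Finset.mem_filter, Finset.mem_Icc] at hk
      rw [if_neg (by omega), mul_zero]

noncomputable def HH (q : ℂ) (m i n : ℕ) (g : PowerSeries ℂ) : ℕ → ℕ → ℂ := fun l S =>
  PowerSeries.coeff n (PowerSeries.X ^ l * RR q (ss m i S) g)

lemma WW_CC (q : ℂ) (m M i n : ℕ) (g : PowerSeries ℂ) (F : PowerSeries ℂ)
    (hF : ∀ n ≤ M, WW q m M i (HH q m i n g) = PowerSeries.coeff n F) (hn : n ≤ M) :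
    WW q m M i (fun l S => PowerSeries.coeff n (CC q 0 (PowerSeries.X ^ l * RR q (ss m i S) g)))
     = PowerSeries.coeff n (CC q 0 F) := by
  simp only [coeff_CC]
  have := WW_sum q m M i (Finset.range (n+1)) (fun k => ee q ((n:ℤ) - k) * q ^ (k^2+0*k))
    (fun k => HH q m i k g)
  simp only [HH] at this
  rw [this]
  apply Finset.sum_congr rfl
  intro k hk
  rw [Finset.mem_range] at hk
  rw [← hF k (by omega)]

lemma W_claim1 {q : ℂ} (hq1 : ‖q‖ < 1) (m M i : ℕ) (hi : i ≤ m) (f : PowerSeries ℂ) :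
    ∀ n ≤ M, WW q m M i (HH q m i n ((CC q 0)^[i] f)) =
      PowerSeries.coeff n ((CC q 0)^[i] (RR q 1 f)) := by
  induction i with
  | zero => intro n hn; simp [WW, HH, ss]
  | succ i ih =>
    intro n hn
    rw [Function.iterate_succ_apply', Function.iterate_succ_apply',
      ← WW_CC q m M i n _ _ (ih (by omega)) hn]
    simp only [WW]
    apply WW_congr
    intro l S _
    rw [CC_key hq1 l _ 0 M n hn (by omega)]
    rw [Finset.filter_true_of_mem (by intros; omega)]
    apply Finset.sum_congr rfl
    intro k _
    have : ss m (i+1) (S+k) = 2 * k + ss m i S - 0 := by unfold ss; omega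
    rw [HH, this]

lemma W_claim2 {q : ℂ} (hq1 : ‖q‖ < 1) (m M : ℕ) (g F : PowerSeries ℂ)
    (hF : ∀ n ≤ M, WW q m M m (HH q m m n g) = PowerSeries.coeff n F) :
    ∀ n ≤ M, WW q m M (m+1) (HH q m (m+1) n (CC q 1 g)) =
      PowerSeries.coeff n (CC q 0 F - CC q 1 g) := by
  intro n hn
  rw [map_sub, ← WW_CC q m M m n g F hF hn]
  have h1 : PowerSeries.coeff n (CC q 1 g) =
     WW q m M m (fun l S => if l = 0 then PowerSeries.coeff n (RR q (2 * S) (CC q 1 g)) else 0) := by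
    rw [WW_single q m M m le_rfl]
    simp [RR, PP_zero, PowerSeries.rescale_one]
  rw [h1, ← WW_sub]
  simp only [WW]
  apply WW_congr
  intro l S _
  rw [CC_key hq1 l _ 1 M n hn (by unfold ss; omega)]
  have e : ∀ k, ss m (m+1) (S+k) = 2 * k + ss m m S - 1 := by intro k; unfold ss; omega
  simp only [HH, e]
  rw [Finset.sum_filter]
  by_cases hl : l = 0
  · subst hl
    rw [if_pos rfl, eq_sub_iff_add_eq]
    have h0 : (0:ℕ) ∈ Finset.Icc 0 M := by simp
    rw [← Finset.add_sum_erase _ _ h0, ← Finset.add_sum_erase _ (fun k => GG q (k - 0) _ * _ * _) h0]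
    rw [if_neg (by simp), zero_add, add_comm]
    congr 1
    · have : 2 * 0 + ss m m S - 1 = 2 * S := by unfold ss; omega
      rw [this]; simp [GG_zero]
    · apply Finset.sum_congr rfl
      intro k hk
      rw [Finset.mem_erase] at hk
      rw [if_pos (by intro; omega)]
  · rw [if_neg hl, sub_zero]
    apply Finset.sum_congr rfl
    intro k hk
    rw [Finset.mem_Icc] at hk
    rw [if_pos (by intro; omega)]

lemma W_claim3 {q : ℂ} (hq1 : ‖q‖ < 1) (m M j : ℕ) (g F : PowerSeries ℂ)
    (hF : ∀ n ≤ M, WW q m M (m+1) (HH q m (m+1) n g) = PowerSeries.coeff n F) :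
    ∀ n ≤ M, WW q m M (m+1+j) (HH q m (m+1+j) n ((CC q 1)^[j] g)) =
      PowerSeries.coeff n ((CC q 0)^[j] F) := by
  induction j with
  | zero => exact hF
  | succ j ih =>
    intro n hn
    rw [Function.iterate_succ_apply', Function.iterate_succ_apply',
      ← WW_CC q m M (m+1+j) n _ _ ih hn, ← add_assoc]
    simp only [WW]
    apply WW_congr
    intro l S hS
    have hS := hS (by omega)
    rw [CC_key hq1 l _ 1 M n hn (by unfold ss; omega)]
    rw [Finset.filter_true_of_mem (by intros; omega)]
    apply Finset.sum_congr rfl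
    intro k _
    have : ss m (m+1+j+1) (S+k) = 2 * k + ss m (m+1+j) S - 1 := by unfold ss; omega
    rw [HH, this]

lemma CC_sub (q : ℂ) (ε : ℕ) (f g : PowerSeries ℂ) : CC q ε (f - g) = CC q ε f - CC q ε g := by
  have : TT q ε (f - g) = TT q ε f - TT q ε g := by
    ext n; simp [TT, mul_sub]
  rw [CC, CC, CC, this, mul_sub]

lemma CC_iter_sub (q : ℂ) (ε j : ℕ) (f g : PowerSeries ℂ) :
    (CC q ε)^[j] (f - g) = (CC q ε)^[j] f - (CC q ε)^[j] g := by
  induction j with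
  | zero => rfl
  | succ j ih => simp only [Function.iterate_succ_apply', ih, CC_sub]

lemma RR_one_series (q : ℂ) (s : ℕ) : RR q s 1 = PP q s := by simp [RR]

lemma HH_one (q : ℂ) (m i n : ℕ) : HH q m i n 1 =
    fun l S => PowerSeries.coeff n (PowerSeries.X ^ l * PP q (ss m i S)) := by
  funext l S
  simp only [HH, RR_one_series]

/-- The finite evaluation, case t > m -/
lemma W_final_gt {q : ℂ} (hq1 : ‖q‖ < 1) (m j n : ℕ) (f : PowerSeries ℂ)
    (hf : (CC q 1)^[j+1] ((CC q 0)^[m] f) = 1) :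
    WW q m n (m+1+j) (fun l S => PowerSeries.coeff n (PowerSeries.X ^ l * PP q (ss m (m+1+j) S))) =
      PowerSeries.coeff n ((CC q 0)^[m+1+j] (RR q 1 f) - (CC q 0)^[j] (CC q 1 ((CC q 0)^[m] f))) := by
  have h := W_claim3 hq1 m n j _ _ (W_claim2 hq1 m n _ _ (W_claim1 hq1 m n m le_rfl f)) n le_rfl
  rw [← Function.iterate_succ_apply, hf] at h
  rw [HH_one] at h
  rw [h, CC_iter_sub, ← Function.iterate_succ_apply' (CC q 0) m, ← Function.iterate_add_apply]
  rw [show m + 1 + j = j + m.succ by omega]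

lemma W_final_eq {q : ℂ} (hq1 : ‖q‖ < 1) (m n : ℕ) (f : PowerSeries ℂ)
    (hf : (CC q 0)^[m] f = 1) :
    WW q m n m (fun l S => PowerSeries.coeff n (PowerSeries.X ^ l * PP q (ss m m S))) =
      PowerSeries.coeff n ((CC q 0)^[m] (RR q 1 f)) := by
  have h := W_claim1 hq1 m n m le_rfl f n le_rfl
  rw [hf] at h
  rw [HH_one] at h
  exact h


lemma VV {q : ℂ} (hq1 : ‖q‖ < 1) (M c : ℕ) :
    ∑ i ∈ Finset.range (M+1), ee q ((M:ℤ) - i) * q ^ (i^2 + c * i) * (ee q i * ee q ((i:ℤ) + c)) =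
      ee q M * ee q ((M:ℤ) + c) := by
  induction M generalizing c with
  | zero => simp [ee_zero]
  | succ M ih =>
    have hne := one_sub_qpow_ne hq1 M
    apply mul_left_cancel₀ hne
    have h1 := ih (c+1)
    have e1 : (1 - q^(M+1)) * (ee q ((M+1:ℕ):ℤ) * ee q (((M+1:ℕ):ℤ) + c)) =
        ee q M * ee q ((M:ℤ) + ((c+1:ℕ):ℤ)) := by
      rw [ee_rec_nat hq1 M]; push_cast
      rw [show (M:ℤ)+1+c = M+(c+1) by ring]; ring
    rw [e1, ← h1, Finset.mul_sum]
    have e2 : ∀ i ∈ Finset.range (M+1+1), (1 - q^(M+1)) *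
        (ee q (((M+1:ℕ):ℤ) - i) * q ^ (i^2 + c * i) * (ee q i * ee q ((i:ℤ) + c))) =
        ee q ((M:ℤ) - i) * q ^ (i^2+c*i+i) * (ee q i * ee q ((i:ℤ) + c))
        + ee q (((M+1:ℕ):ℤ) - i) * q ^ (i^2 + c * i) * (ee q ((i:ℤ)-1) * ee q ((i:ℤ) + c)) := by
      intro i hi
      rw [Finset.mem_range] at hi
      obtain ⟨d, hd⟩ : ∃ d, M + 1 = i + d := ⟨M+1-i, by omega⟩
      have a1 : ((M+1:ℕ):ℤ) - i = d := by rw [hd]; push_cast; ring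
      have a2 : (M:ℤ) - i = (d:ℤ) - 1 := by omega
      rw [a1, a2, ee_rec hq1 d, ee_rec hq1 i, hd, zpow_natCast, zpow_natCast]
      ring
    rw [Finset.sum_congr rfl e2, Finset.sum_add_distrib, Finset.sum_range_succ,
      Finset.sum_range_succ' (fun i : ℕ => ee q (((M+1:ℕ):ℤ) - i) * q ^ (i^2 + c * i) * (ee q ((i:ℤ)-1) * ee q ((i:ℤ) + c)))]
    rw [ee_neg q (show (M:ℤ) - ((M+1:ℕ):ℤ) < 0 by push_cast; omega),
      ee_neg q (show ((0:ℕ):ℤ) - 1 < 0 by omega)]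
    simp only [zero_mul, mul_zero, add_zero]
    rw [← Finset.sum_add_distrib]
    apply Finset.sum_congr rfl
    intro i hi
    have b1 : ((M+1:ℕ):ℤ) - ((i+1:ℕ):ℤ) = (M:ℤ) - i := by push_cast; ring
    have b2 : ((i+1:ℕ):ℤ) - 1 = i := by push_cast; ring
    have b3 : ((i+1:ℕ):ℤ) + c = (((i+c:ℕ):ℤ)+1) := by push_cast; ring
    have b4 : (i:ℤ) + c = ((i+c:ℕ):ℤ) := by push_cast; ring
    have b5 : (i:ℤ) + ((c+1:ℕ):ℤ) = (((i+c:ℕ):ℤ)+1) := by push_cast; ring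
    rw [b1, b2, b3, b4, b5, ee_rec_nat hq1 (i+c)]
    ring

lemma eigen_nat {q : ℂ} (hq1 : ‖q‖ < 1) (n u ε : ℕ) :
    ∑ k ∈ Finset.range (n+1), ee q ((n:ℤ) - k) * q ^ (k^2 + ε * k) *
      (ee q ((k:ℤ) - u) * ee q ((k:ℤ) + u + ε)) =
      q ^ (u^2 + ε * u) * (ee q ((n:ℤ) - u) * ee q ((n:ℤ) + u + ε)) := by
  by_cases h : u ≤ n
  · obtain ⟨M, rfl⟩ := Nat.exists_eq_add_of_le h
    rw [add_assoc u M 1, Finset.sum_range_add, Finset.sum_eq_zero, zero_add]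
    · have h1 := VV hq1 M (2*u+ε)
      have a1 : ((u+M:ℕ):ℤ) - u = M := by push_cast; ring
      have a2 : ((u+M:ℕ):ℤ) + u + ε = (M:ℤ) + ((2*u+ε:ℕ):ℤ) := by push_cast; ring
      rw [a1, a2, ← h1, Finset.mul_sum]
      apply Finset.sum_congr rfl
      intro i _
      have b1 : ((u+M:ℕ):ℤ) - ((u+i:ℕ):ℤ) = M - i := by push_cast; ring
      have b2 : ((u+i:ℕ):ℤ) - u = i := by push_cast; ring
      have b3 : ((u+i:ℕ):ℤ) + u + ε = (i:ℤ) + ((2*u+ε:ℕ):ℤ) := by push_cast; ring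
      rw [b1, b2, b3]
      ring
    · intro k hk
      rw [Finset.mem_range] at hk
      rw [ee_neg q (show (k:ℤ) - u < 0 by omega)]; ring
  · rw [ee_neg q (show (n:ℤ) - u < 0 by omega)]
    rw [Finset.sum_eq_zero]
    · ring
    · intro k hk
      rw [Finset.mem_range] at hk
      rw [ee_neg q (show (k:ℤ) - u < 0 by omega)]; ring

lemma eigen {q : ℂ} (hq1 : ‖q‖ < 1) (n ε : ℕ) (hε : ε ≤ 1) (r : ℤ) :
    ∑ k ∈ Finset.range (n+1), ee q ((n:ℤ) - k) * q ^ (k^2 + ε * k) *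
      (ee q ((k:ℤ) - r) * ee q ((k:ℤ) + r + ε)) =
      q ^ (r^2 + ε * r) * (ee q ((n:ℤ) - r) * ee q ((n:ℤ) + r + ε)) := by
  rcases le_or_gt 0 r with h | h
  · lift r to ℕ using h
    rw [eigen_nat hq1]; norm_cast
  · obtain ⟨u, hu⟩ : ∃ u : ℕ, r = -(u:ℤ) - ε := ⟨(-r - ε).toNat, by omega⟩
    subst hu
    have h1 := eigen_nat hq1 n u ε
    have a : ∀ k : ℤ, k - (-(u:ℤ) - ε) = k + u + ε := by intro k; ring
    have b : ∀ k : ℤ, k + (-(u:ℤ) - ε) + ε = k - u := by intro k; ring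
    have c : (-(u:ℤ) - ε)^2 + ε * (-(u:ℤ) - ε) = ((u^2+ε*u : ℕ):ℤ) := by push_cast; ring
    simp only [a, b]
    rw [c, zpow_natCast, mul_comm (ee q ((n:ℤ) + u + ε)), ← h1]
    apply Finset.sum_congr rfl
    intro k _; ring

noncomputable def BB (q : ℂ) (ε : ℕ) (φ : ℤ → ℂ) : PowerSeries ℂ := PowerSeries.mk fun n =>
  ∑ r ∈ Finset.Icc (-(n:ℤ) - 1) n, φ r * (ee q ((n:ℤ) - r) * ee q ((n:ℤ) + r + ε))

lemma BB_coeff_ext (q : ℂ) (ε : ℕ) (hε : ε ≤ 1) (φ : ℤ → ℂ) (k n : ℕ) (hk : k ≤ n) :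
    PowerSeries.coeff k (BB q ε φ) =
      ∑ r ∈ Finset.Icc (-(n:ℤ) - 1) n, φ r * (ee q ((k:ℤ) - r) * ee q ((k:ℤ) + r + ε)) := by
  rw [BB, PowerSeries.coeff_mk]
  apply Finset.sum_subset
  · intro r; simp only [Finset.mem_Icc]; omega
  · intro r _ hr
    rw [Finset.mem_Icc] at hr
    by_cases h : r ≤ k
    · rw [ee_neg q (show (k:ℤ) + r + ε < 0 by omega)]; ring
    · rw [ee_neg q (show (k:ℤ) - r < 0 by omega)]; ring

lemma CC_BB {q : ℂ} (hq1 : ‖q‖ < 1) (ε : ℕ) (hε : ε ≤ 1) (φ : ℤ → ℂ) :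
    CC q ε (BB q ε φ) = BB q ε (fun r => q ^ (r^2 + ε * r) * φ r) := by
  ext n
  rw [coeff_CC]
  conv_rhs => rw [BB, PowerSeries.coeff_mk]
  have : ∀ k ∈ Finset.range (n+1), ee q ((n:ℤ) - k) * q ^ (k^2+ε*k) * PowerSeries.coeff k (BB q ε φ)
      = ∑ r ∈ Finset.Icc (-(n:ℤ) - 1) n, φ r * (ee q ((n:ℤ) - k) * q ^ (k^2 + ε * k) *
      (ee q ((k:ℤ) - r) * ee q ((k:ℤ) + r + ε))) := by
    intro k hk
    rw [Finset.mem_range] at hk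
    rw [BB_coeff_ext q ε hε φ k n (by omega), Finset.mul_sum]
    apply Finset.sum_congr rfl; intro r _; ring
  rw [Finset.sum_congr rfl this, Finset.sum_comm]
  apply Finset.sum_congr rfl; intro r _
  rw [← Finset.mul_sum, eigen hq1 n ε hε]; ring

lemma CC_BB_iter {q : ℂ} (hq0 : q ≠ 0) (hq1 : ‖q‖ < 1) (ε : ℕ) (hε : ε ≤ 1) (φ : ℤ → ℂ) (i : ℕ) :
    (CC q ε)^[i] (BB q ε φ) = BB q ε (fun r => q ^ (i * (r^2 + ε * r)) * φ r) := by
  induction i with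
  | zero => simp
  | succ i ih =>
    rw [Function.iterate_succ_apply', ih, CC_BB hq1 ε hε]
    congr 1
    ext r
    rw [← mul_assoc, ← zpow_add₀ hq0]
    congr 2; push_cast; ring

lemma sum_refl (n : ℕ) (F : ℤ → ℂ) : ∑ r ∈ Finset.Icc (-(n:ℤ) - 1) n, F (-1 - r) =
    ∑ r ∈ Finset.Icc (-(n:ℤ) - 1) n, F r := by
  apply Finset.sum_nbij' (fun r => -1 - r) (fun r => -1 - r)
  · intro r; simp only [Finset.mem_Icc]; omega
  · intro r; simp only [Finset.mem_Icc]; omega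
  · intro r _; ring
  · intro r _; ring
  · intro r _; rfl

lemma BB_anti {q : ℂ} (hq0 : q ≠ 0) (hq1 : ‖q‖ < 1) (φ : ℤ → ℂ)
    (hφ : ∀ r, φ (-1 - r) = - q ^ (2 * r + 1) * φ r) : BB q 0 φ = BB q 1 φ := by
  ext n
  simp only [BB, PowerSeries.coeff_mk]
  have h1 : ∀ r : ℤ, φ r * (ee q ((n:ℤ) - r) * ee q ((n:ℤ) + r + (0:ℕ))) =
     φ r * (ee q ((n:ℤ) - r) * ee q ((n:ℤ) + r + (1:ℕ))) -
     q ^ (n + 1) * (q ^ r * φ r * (ee q ((n:ℤ) - r) * ee q ((n:ℤ) + r + (1:ℕ)))) := by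
    intro r
    have := ee_rec hq1 ((n:ℤ) + r + 1)
    rw [add_sub_cancel_right] at this
    simp only [Nat.cast_zero, add_zero, Nat.cast_one]
    have e : q ^ ((n:ℤ)+r+1) = q^(n+1) * q ^ r := by
      rw [show (n:ℤ)+r+1 = ((n+1:ℕ):ℤ) + r by push_cast; ring, zpow_add₀ hq0, zpow_natCast]
    rw [this, e]; ring
  rw [Finset.sum_congr rfl (fun r _ => h1 r), Finset.sum_sub_distrib, ← Finset.mul_sum]
  have h2 := sum_refl n (fun r => q ^ r * φ r * (ee q ((n:ℤ) - r) * ee q ((n:ℤ) + r + (1:ℕ))))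
  have h3 : ∀ r : ℤ, (fun r => q ^ r * φ r * (ee q ((n:ℤ) - r) * ee q ((n:ℤ) + r + (1:ℕ)))) (-1 - r)
     = - ((fun r => q ^ r * φ r * (ee q ((n:ℤ) - r) * ee q ((n:ℤ) + r + (1:ℕ)))) r) := by
    intro r
    simp only [Nat.cast_one]
    rw [hφ, show (n:ℤ) - (-1 - r) = n + r + 1 by ring, show (n:ℤ) + (-1 - r) + 1 = n - r by ring]
    have : q ^ (-1 - r) * q ^ (2*r+1) = q ^ r := by rw [← zpow_add₀ hq0]; congr 1; ring
    linear_combination (-φ r * (ee q ((n:ℤ) - r) * ee q ((n:ℤ) + r + 1))) * this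
  rw [Finset.sum_congr rfl (fun r _ => h3 r), Finset.sum_neg_distrib] at h2
  have h4 : ∑ r ∈ Finset.Icc (-(n:ℤ) - 1) n, (fun r => q ^ r * φ r * (ee q ((n:ℤ) - r) * ee q ((n:ℤ) + r + (1:ℕ)))) r = 0 := by
    linear_combination (-1/2) * h2
  rw [h4]; ring

noncomputable def c0 (q : ℂ) (r : ℤ) : ℂ := (-1) ^ r * q ^ (r * (r - 1) / 2)

lemma tri_ex (r : ℤ) : ∃ y, r * (r - 1) = 2 * y ∧ r * (r - 1) / 2 = y := by
  obtain ⟨y, hy⟩ := even_iff_two_dvd.mp (Int.even_mul_pred_self r)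
  exact ⟨y, hy, by omega⟩

lemma c0_neg {q : ℂ} (hq0 : q ≠ 0) (r : ℤ) : c0 q (-r) = q ^ r * c0 q r := by
  unfold c0
  obtain ⟨y, h1, h2⟩ := tri_ex r
  obtain ⟨z, h3, h4⟩ := tri_ex (-r)
  rw [h2, h4]
  have : z = r + y := by nlinarith
  rw [this, zpow_add₀ hq0, zpow_neg, ← inv_zpow]
  norm_num; ring

lemma c0_succ {q : ℂ} (hq0 : q ≠ 0) (r : ℤ) : c0 q (r+1) = - q ^ r * c0 q r := by
  unfold c0
  obtain ⟨y, h1, h2⟩ := tri_ex r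
  obtain ⟨z, h3, h4⟩ := tri_ex (r+1)
  rw [h2, h4]
  have : z = r + y := by nlinarith
  rw [this, zpow_add₀ hq0, zpow_add₀ (by norm_num : (-1:ℂ) ≠ 0)]
  ring

lemma c0_anti {q : ℂ} (hq0 : q ≠ 0) (r : ℤ) : c0 q (-1 - r) = - q ^ (2*r+1) * c0 q r := by
  rw [show -1 - r = -(r+1) by ring, c0_neg hq0, c0_succ hq0]
  have : q ^ (2*r+1) = q ^ (r+1) * q ^ r := by rw [← zpow_add₀ hq0]; congr 1; ring
  rw [this]; ring

lemma BB_c0 {q : ℂ} (hq0 : q ≠ 0) (hq1 : ‖q‖ < 1) : BB q 0 (c0 q) = 1 := by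
  ext n
  rw [BB, PowerSeries.coeff_mk, PowerSeries.coeff_one]
  rcases n with _ | n
  · rw [if_pos rfl]
    have : Finset.Icc (-((0:ℕ):ℤ) - 1) ((0:ℕ):ℤ) = {-1, 0} := by
      ext x; simp only [Finset.mem_Icc, Finset.mem_insert, Finset.mem_singleton]; omega
    rw [this, Finset.sum_insert (by simp), Finset.sum_singleton]
    simp [ee_zero, ee_neg, c0]
  · rw [if_neg (by omega)]
    set N : ℕ := n + 1 with hN
    set K : ℤ → ℂ := fun r => ee q ((N:ℤ) - r) * ee q ((N:ℤ) + r + (0:ℕ)) with hK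
    set s : ℤ → ℂ := fun r => c0 q r * (ee q ((N:ℤ) - r) * ee q ((N:ℤ) + r - 1)) with hs
    have key : ∀ r, (1 - q^N) * (c0 q r * K r + q ^ r * c0 q r * K r) = s r - s (r+1) := by
      intro r
      simp only [hs, hK, Nat.cast_zero, add_zero]
      rw [show (N:ℤ) - (r+1) = N - r - 1 by ring, show (N:ℤ) + (r+1) - 1 = N + r by ring,
        ee_rec hq1 ((N:ℤ) - r), ee_rec hq1 ((N:ℤ) + r), c0_succ hq0, zpow_add₀ hq0, zpow_sub₀ hq0,
        zpow_natCast]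
      have := zpow_ne_zero r hq0
      field_simp
      ring
    have tel : ∀ a : ℕ, ∑ r ∈ Finset.Icc (-(a:ℤ)-1) a, (s r - s (r+1)) = s (-(a:ℤ)-1) - s (a+1) := by
      intro a
      have : ∀ (b : ℕ) (c : ℤ), ∑ r ∈ Finset.Ico c (c + b), (s r - s (r+1)) = s c - s (c+b) := by
        intro b c
        induction b with
        | zero => simp
        | succ b ih =>
          have : Finset.Ico c (c + ((b+1:ℕ):ℤ)) = insert (c + (b:ℤ)) (Finset.Ico c (c+b)) := by
            ext x; simp only [Finset.mem_Ico, Finset.mem_insert]; omega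
          rw [this, Finset.sum_insert (by simp), ih]
          push_cast; rw [← add_assoc]; ring
      have h2 := this (2*a+2) (-(a:ℤ)-1)
      rw [show -(a:ℤ)-1 + ((2*a+2:ℕ):ℤ) = a + 1 by push_cast; ring] at h2
      rw [← h2]
      congr 1
    have h1 := tel N
    have z1 : s (-(N:ℤ)-1) = 0 := by
      simp only [hs]; rw [ee_neg q (show (N:ℤ) + (-(N:ℤ)-1) - 1 < 0 by omega)]; ring
    have z2 : s (N+1) = 0 := by
      simp only [hs]; rw [ee_neg q (show (N:ℤ) - (N+1) < 0 by omega)]; ring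
    rw [z1, z2, ← Finset.sum_congr rfl (fun r _ => key r), ← Finset.mul_sum] at h1
    have hne := one_sub_qpow_ne hq1 n
    have h3 := (mul_eq_zero.mp (h1.trans (sub_zero 0))).resolve_left hne
    rw [Finset.sum_add_distrib] at h3
    -- symmetric
    have hsub : Finset.Icc (-(N:ℤ)) N ⊆ Finset.Icc (-(N:ℤ)-1) N := by
      intro r; simp only [Finset.mem_Icc]; omega
    have hK0 : ∀ r ∈ Finset.Icc (-(N:ℤ)-1) N, r ∉ Finset.Icc (-(N:ℤ)) N → K r = 0 := by
      intro r hr hr'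
      rw [Finset.mem_Icc] at hr hr'
      simp only [hK]; rw [ee_neg q (show (N:ℤ) + r + (0:ℕ) < 0 by omega)]; ring
    have r1 := Finset.sum_subset (f := fun r => c0 q r * K r) hsub
      (fun r a b => by simp only [hK0 r a b, mul_zero])
    have r2 := Finset.sum_subset (f := fun r => q ^ r * c0 q r * K r) hsub
      (fun r a b => by simp only [hK0 r a b, mul_zero])
    have r3 : ∑ r ∈ Finset.Icc (-(N:ℤ)) N, c0 q r * K r =
        ∑ r ∈ Finset.Icc (-(N:ℤ)) N, q ^ r * c0 q r * K r := by
      apply Finset.sum_nbij' (fun r => -r) (fun r => -r)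
      · intro r; simp only [Finset.mem_Icc]; omega
      · intro r; simp only [Finset.mem_Icc]; omega
      · intro r _; ring
      · intro r _; ring
      · intro r _
        have hKs : K (-r) = K r := by
          simp only [hK, Nat.cast_zero, add_zero]
          rw [sub_neg_eq_add, ← sub_eq_add_neg]; ring
        rw [hKs, c0_neg hq0, ← mul_assoc (q ^ (-r)), ← zpow_add₀ hq0]; simp
    linear_combination (1/2) * h3 - (1/2) * r1 + (1/2) * r2 + (1/2) * r3


lemma Rl0 {q : ℂ} (hq0 : q ≠ 0) (hq1 : ‖q‖ < 1) (u Mb : ℕ) (hu : u ≤ Mb) (N : ℕ) (hN : N < Mb) :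
    q ^ (2 * (u:ℤ)^2) * ∑ j ∈ Finset.range (N+1), q ^ j * (ee q ((j:ℤ) - u) * ee q ((j:ℤ) + u)) =
    ∑ n ∈ Finset.Ico u Mb, q ^ (2 * (n:ℤ)^2 + n) * (1 - q ^ (2 * (n:ℤ) + 1)) *
      (ee q ((N:ℤ) - n) * ee q ((N:ℤ) + n + 1)) := by
  set X : ℤ → ℂ := fun N => ∑ n ∈ Finset.Ico u Mb, q ^ (2 * (n:ℤ)^2 + n) * (1 - q ^ (2 * (n:ℤ) + 1)) *
      (ee q (N - n) * ee q (N + n + 1)) with hX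
  have step : ∀ N : ℤ, N < Mb → X N - X (N-1) =
      q ^ (2 * (u:ℤ)^2) * (q ^ N * (ee q (N - u) * ee q (N + u))) := by
    intro N hN
    simp only [hX]
    rw [← Finset.sum_sub_distrib]
    set s : ℕ → ℂ := fun n => - (q ^ N * (q ^ (2 * (n:ℤ)^2) * (ee q (N - n) * ee q (N + n)))) with hs
    have h1 : ∀ n ∈ Finset.Ico u Mb, q ^ (2 * (n:ℤ)^2 + n) * (1 - q ^ (2 * (n:ℤ) + 1)) *
      (ee q (N - n) * ee q (N + n + 1)) - q ^ (2 * (n:ℤ)^2 + n) * (1 - q ^ (2 * (n:ℤ) + 1)) *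
      (ee q (N - 1 - n) * ee q (N - 1 + n + 1)) = s (n+1) - s n := by
      intro n _
      simp only [hs]
      push_cast
      rw [show N - 1 - (n:ℤ) = N - n - 1 by ring, show N - 1 + (n:ℤ) + 1 = N + n + 1 - 1 by ring,
        show N - ((n:ℤ) + 1) = N - n - 1 by ring, show N + ((n:ℤ) + 1) = N + n + 1 by ring,
        ee_rec hq1, ee_rec hq1]
      have h2 : ee q (N + n) = (1 - q ^ (N+n+1)) * ee q (N+n+1) := by
        have := ee_rec hq1 (N + n + 1)
        rwa [add_sub_cancel_right] at this
      rw [h2]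
      rw [show 2 * ((n:ℤ)+1)^2 = 2 * (n:ℤ)^2 + n + n + n + n + 1 + 1 by ring,
        show 2 * (n:ℤ) + 1 = n + n + 1 by ring]
      simp only [zpow_add₀ hq0, zpow_sub₀ hq0, zpow_one]
      have := zpow_ne_zero (n:ℤ) hq0
      have := zpow_ne_zero N hq0
      field_simp
      ring
    rw [Finset.sum_congr rfl h1, Finset.sum_Ico_sub _ hu]
    simp only [hs]
    rw [ee_neg q (show N - (Mb:ℤ) < 0 by omega)]
    ring
  have h0 : X (-1) = 0 := by
    simp only [hX]
    apply Finset.sum_eq_zero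
    intro n _
    rw [ee_neg q (show -1 - (n:ℤ) < 0 by omega)]; ring
  change _ = X N
  induction N with
  | zero =>
    have := step 0 (by omega)
    simp only [zero_sub, h0, sub_zero, zpow_zero, one_mul] at this
    rw [Nat.cast_zero, this]; simp
  | succ N ih =>
    rw [Finset.sum_range_succ, mul_add, ih (by omega)]
    have := step ((N+1:ℕ):ℤ) (by omega)
    rw [zpow_natCast] at this
    rw [← this]
    push_cast; rw [add_sub_cancel_right]; ring

lemma Rl1 {q : ℂ} (hq0 : q ≠ 0) (hq1 : ‖q‖ < 1) (u N : ℕ) :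
    ∑ j ∈ Finset.range (N+1), q ^ j * (ee q ((j:ℤ) - u) * ee q ((j:ℤ) + u)) =
    q ^ (u:ℤ) * (ee q ((N:ℤ) - u) * ee q ((N:ℤ) + u)) + q ^ (-2 * (u:ℤ)^2) *
    ∑ n ∈ Finset.Ico (u+1) (N+1), q ^ (2 * (n:ℤ)^2) * (q ^ (n:ℤ) - q ^ (-(n:ℤ))) *
      (ee q ((N:ℤ) - n) * ee q ((N:ℤ) + n)) := by
  have h := Rl0 hq0 hq1 u (N+u+1) (by omega) N (by omega)
  set K : ℕ → ℂ := fun n => ee q ((N:ℤ) - n) * ee q ((N:ℤ) + n) with hK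
  set a : ℕ → ℂ := fun n => q ^ (2 * (n:ℤ)^2 + n) * K n with ha
  set b : ℕ → ℂ := fun n => q ^ (2 * (n:ℤ)^2 - n) * K n with hb
  have e1 : ∀ n ∈ Finset.Ico u (N+u+1), q ^ (2 * (n:ℤ)^2 + n) * (1 - q ^ (2 * (n:ℤ) + 1)) *
      (ee q ((N:ℤ) - n) * ee q ((N:ℤ) + n + 1)) = a n - b (n+1) := by
    intro n _
    simp only [ha, hb, hK]
    push_cast
    have h2 : ee q ((N:ℤ) + n) = (1 - q ^ ((N:ℤ)+n+1)) * ee q ((N:ℤ)+n+1) := by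
      have := ee_rec hq1 ((N:ℤ) + n + 1)
      rwa [add_sub_cancel_right] at this
    rw [show (N:ℤ) - ((n:ℤ) + 1) = N - n - 1 by ring, show (N:ℤ) + ((n:ℤ) + 1) = N + n + 1 by ring,
        ee_rec hq1, h2, show 2 * ((n:ℤ)+1)^2 - ((n:ℤ)+1) = 2 * (n:ℤ)^2 + n + n + n + 1 by ring,
        show 2 * (n:ℤ) + 1 = n + n + 1 by ring]
    simp only [zpow_add₀ hq0, zpow_sub₀ hq0, zpow_one]
    have := zpow_ne_zero (n:ℤ) hq0
    field_simp
    ring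
  have hz : ∀ n, N < n → K n = 0 := by
    intro n hn; simp only [hK]; rw [ee_neg q (by omega), zero_mul]
  rw [Finset.sum_congr rfl e1, Finset.sum_sub_distrib, Finset.sum_eq_sum_Ico_succ_bot (by omega),
    Finset.sum_Ico_add' b u (N+u+1) 1] at h
  have e2 : ∀ g : ℕ → ℂ, ∀ B, N + 1 ≤ B → ∑ n ∈ Finset.Ico (u+1) B, g n * K n =
      ∑ n ∈ Finset.Ico (u+1) (N+1), g n * K n := by
    intro g B hB
    symm
    apply Finset.sum_subset
    · intro x; simp only [Finset.mem_Ico]; omega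
    · intro x hx hx'
      rw [Finset.mem_Ico] at hx hx'
      rw [hz x (by omega), mul_zero]
  simp only [ha, hb] at h
  rw [e2 _ (N+u+1) (by omega), e2 _ (N+u+1+1) (by omega)] at h
  have e3 : ∑ n ∈ Finset.Ico (u+1) (N+1), q ^ (2 * (n:ℤ)^2) * (q ^ (n:ℤ) - q ^ (-(n:ℤ))) * K n
     = ∑ n ∈ Finset.Ico (u+1) (N+1), q ^ (2 * (n:ℤ)^2 + n) * K n - ∑ n ∈ Finset.Ico (u+1) (N+1), q ^ (2 * (n:ℤ)^2 - n) * K n := by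
    rw [← Finset.sum_sub_distrib]
    apply Finset.sum_congr rfl
    intro n _
    rw [zpow_add₀ hq0, sub_eq_add_neg (2 * (n:ℤ)^2), zpow_add₀ hq0]; ring
  have e4 : q ^ (-2 * (u:ℤ)^2) * q ^ (2 * (u:ℤ)^2) = 1 := by
    rw [← zpow_add₀ hq0]; simp
  rw [e3]
  rw [zpow_add₀ hq0] at h
  linear_combination (q ^ (-2 * (u:ℤ)^2)) * h - (∑ j ∈ Finset.range (N+1), q ^ j * (ee q ((j:ℤ) - u) * ee q ((j:ℤ) + u)) - q^(u:ℤ) * K u) * e4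

lemma Rl2 {q : ℂ} (hq0 : q ≠ 0) (hq1 : ‖q‖ < 1) (r : ℤ) (N : ℕ) :
    ∑ j ∈ Finset.range (N+1), q ^ j * (ee q ((j:ℤ) - r) * ee q ((j:ℤ) + r)) =
    q ^ |r| * (ee q ((N:ℤ) - r) * ee q ((N:ℤ) + r)) +
    ∑ n ∈ Finset.Icc (-(N:ℤ) - 1) N, if |r| < n then q ^ (-2 * r^2) *
      (q ^ (2 * n^2) * (q ^ n - q ^ (-n)) * (ee q ((N:ℤ) - n) * ee q ((N:ℤ) + n))) else 0 := by
  have h := Rl1 hq0 hq1 r.natAbs N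
  have hc : (r.natAbs : ℤ) = |r| := Int.natCast_natAbs r
  rw [hc, sq_abs] at h
  have e : ∀ j : ℤ, ee q (j - |r|) * ee q (j + |r|) = ee q (j - r) * ee q (j + r) := by
    intro j
    rcases abs_choice r with h | h
    · rw [h]
    · rw [h, sub_neg_eq_add, ← sub_eq_add_neg, mul_comm]
  simp only [e] at h
  rw [h]
  congr 1
  rw [← Finset.sum_filter, Finset.mul_sum]
  apply Finset.sum_nbij' (fun n : ℕ => (n:ℤ)) (fun n : ℤ => n.toNat)
  · intro n hn; rw [Finset.mem_Ico] at hn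
    rw [Finset.mem_filter, Finset.mem_Icc]; omega
  · intro n hn; rw [Finset.mem_filter, Finset.mem_Icc] at hn
    have := abs_nonneg r
    rw [Finset.mem_Ico]; omega
  · intro n _; simp
  · intro n hn; rw [Finset.mem_filter, Finset.mem_Icc] at hn
    have := abs_nonneg r
    omega
  · intro n _; rfl

lemma GG_one {q : ℂ} (hq1 : ‖q‖ < 1) (i : ℕ) : GG q i 1 = 1 := by
  rw [GG, ee_nat, pow_one]
  exact mul_inv_cancel₀ (qPoch_qq_ne hq1 i)

lemma coeff_RR_one {q : ℂ} (hq1 : ‖q‖ < 1) (f : PowerSeries ℂ) (N : ℕ) :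
    PowerSeries.coeff N (RR q 1 f) = ∑ j ∈ Finset.range (N+1), q ^ j * PowerSeries.coeff j f := by
  rw [RR, mul_comm, PowerSeries.coeff_mul, Finset.Nat.sum_antidiagonal_eq_sum_range_succ_mk]
  apply Finset.sum_congr rfl
  intro j _
  simp [PP, GG_one hq1]

noncomputable def theta (q : ℂ) (φ : ℤ → ℂ) (r : ℤ) : ℂ :=
  φ r * q ^ |r| + q ^ (2 * r^2) * (q ^ r - q ^ (-r)) * ∑ ρ ∈ Finset.Ioo (-r) r, q ^ (-2 * ρ^2) * φ ρ

lemma RR_BB {q : ℂ} (hq0 : q ≠ 0) (hq1 : ‖q‖ < 1) (φ : ℤ → ℂ) :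
    RR q 1 (BB q 0 φ) = BB q 0 (theta q φ) := by
  ext N
  rw [coeff_RR_one hq1]
  have h1 : ∀ j ∈ Finset.range (N+1), q ^ j * PowerSeries.coeff j (BB q 0 φ) =
      ∑ r ∈ Finset.Icc (-(N:ℤ) - 1) N, φ r * (q ^ j * (ee q ((j:ℤ) - r) * ee q ((j:ℤ) + r))) := by
    intro j hj
    rw [Finset.mem_range] at hj
    rw [BB_coeff_ext q 0 (by omega) φ j N (by omega), Finset.mul_sum]
    apply Finset.sum_congr rfl
    intro r _
    simp only [Nat.cast_zero, add_zero]; ring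
  rw [Finset.sum_congr rfl h1, Finset.sum_comm]
  simp only [← Finset.mul_sum]
  simp only [Rl2 hq0 hq1]
  simp only [mul_add, Finset.sum_add_distrib, Finset.mul_sum]
  rw [BB, PowerSeries.coeff_mk]
  simp only [theta, add_mul, Finset.sum_add_distrib, Nat.cast_zero, add_zero]
  congr 1
  · apply Finset.sum_congr rfl; intro r _; ring
  · rw [Finset.sum_comm]
    apply Finset.sum_congr rfl
    intro n hn
    rw [Finset.mem_Icc] at hn
    simp only [mul_ite, mul_zero]
    rw [← Finset.sum_filter]
    have : Finset.filter (fun r => |r| < n) (Finset.Icc (-(N:ℤ) - 1) N) = Finset.Ioo (-n) n := by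
      ext r
      rw [Finset.mem_filter, Finset.mem_Icc, Finset.mem_Ioo, abs_lt]; omega
    rw [this, Finset.mul_sum, Finset.sum_mul]
    apply Finset.sum_congr rfl
    intro r _
    ring

noncomputable def psi (q : ℂ) (t d : ℕ) (r : ℤ) : ℂ := c0 q r * q ^ (-((t:ℤ)+2) * r^2 - d * r)

noncomputable def alpha (q : ℂ) (t d : ℕ) (n : ℤ) : ℂ :=
  q ^ (((t:ℤ)+2) * n^2) * (q ^ n - q ^ (-n)) * ∑ r ∈ Finset.Ico (-n) n, psi q t d r

lemma fold_sum (N : ℕ) (F : ℤ → ℂ) : ∑ r ∈ Finset.Icc (-(N:ℤ) - 1) N, F r =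
    F 0 + F (-(N:ℤ)-1) + ∑ n ∈ Finset.Icc 1 N, (F n + F (-(n:ℤ))) := by
  induction N with
  | zero =>
    have : Finset.Icc (-((0:ℕ):ℤ) - 1) ((0:ℕ):ℤ) = {-1, 0} := by
      ext x; simp only [Finset.mem_Icc, Finset.mem_insert, Finset.mem_singleton]; omega
    rw [this, Finset.sum_insert (by simp), Finset.sum_singleton]; simp; ring
  | succ N ih =>
    have : Finset.Icc (-((N+1:ℕ):ℤ) - 1) ((N+1:ℕ):ℤ) =
        insert (-((N+1:ℕ):ℤ) - 1) (insert ((N+1:ℕ):ℤ) (Finset.Icc (-(N:ℤ) - 1) N)) := by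
      ext x; simp only [Finset.mem_Icc, Finset.mem_insert]; push_cast; omega
    rw [this, Finset.sum_insert, Finset.sum_insert, ih, Finset.sum_Icc_succ_top (by omega)]
    · push_cast; ring_nf
    · simp
    · simp only [Finset.mem_Icc, Finset.mem_insert]; push_cast; omega

noncomputable def phi (q : ℂ) (m d : ℕ) (r : ℤ) : ℂ := c0 q r * q ^ (-((m:ℤ) * r^2) - d * (r^2 + r))

lemma beta_form {q : ℂ} (hq0 : q ≠ 0) (hq1 : ‖q‖ < 1) (m d N : ℕ) :
    PowerSeries.coeff N ((CC q 0)^[m+d] (RR q 1 (BB q 0 (phi q m d))) -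
       BB q 0 (fun r => c0 q r * q ^ (r - d * r))) =
    ∑ n ∈ Finset.Icc 1 N, alpha q (m+d) d n * (ee q ((N:ℤ) - n) * ee q ((N:ℤ) + n)) := by
  rw [RR_BB hq0 hq1, CC_BB_iter hq0 hq1 0 (by omega), map_sub]
  simp only [BB, PowerSeries.coeff_mk]
  rw [← Finset.sum_sub_distrib, fold_sum]
  simp only [Nat.cast_zero, zero_mul, add_zero]
  have hl : ee q ((N:ℤ) + (-(N:ℤ)-1)) = 0 := ee_neg q (by omega)
  rw [hl]
  have hpos : ∀ r : ℤ, q ^ (((m+d:ℕ):ℤ) * r^2) * phi q m d r = c0 q r * q ^ (-d * r) := by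
    intro r
    have : q ^ (((m+d:ℕ):ℤ) * r^2) * q ^ (-((m:ℤ) * r^2) - d * (r^2 + r)) = q ^ (-d * r) := by
      rw [← zpow_add₀ hq0]; congr 1; push_cast; ring
    rw [phi]
    linear_combination (c0 q r) * this
  have hpsi : ∀ r : ℤ, q ^ (-2 * r^2) * phi q m d r = psi q (m+d) d r := by
    intro r
    have : q ^ (-2 * r^2) * q ^ (-((m:ℤ) * r^2) - d * (r^2 + r)) = q ^ (-(((m+d:ℕ):ℤ)+2) * r^2 - d * r) := by
      rw [← zpow_add₀ hq0]; congr 1; push_cast; ring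
    rw [phi, psi]
    linear_combination (c0 q r) * this
  have hth : ∀ r : ℤ, q ^ (((m+d:ℕ):ℤ) * r^2) * theta q (phi q m d) r =
      c0 q r * q ^ (-d * r) * q ^ |r| +
      q ^ ((((m+d:ℕ):ℤ)+2) * r^2) * (q ^ r - q ^ (-r)) * ∑ ρ ∈ Finset.Ioo (-r) r, psi q (m+d) d ρ := by
    intro r
    rw [theta, mul_add, ← mul_assoc, hpos]
    simp only [hpsi]
    have : q ^ ((((m+d:ℕ):ℤ)+2) * r^2) = q ^ (((m+d:ℕ):ℤ) * r^2) * q ^ (2 * r^2) := by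
      rw [← zpow_add₀ hq0]; congr 1; ring
    rw [this]; ring
  simp only [hth]
  have z0 : q ^ (-d * (0:ℤ)) = 1 := by simp
  simp only [mul_zero, sub_zero, add_zero, zero_mul]
  simp only [abs_zero, neg_zero, sub_self, mul_zero, zero_mul, zpow_zero, mul_one, zero_add, add_zero]
  apply Finset.sum_congr rfl
  intro n hn
  rw [Finset.mem_Icc] at hn
  have hIoo : Finset.Ioo (- -(n:ℤ)) (-(n:ℤ)) = ∅ := by
    apply Finset.Ioo_eq_empty; omega
  rw [hIoo, Finset.sum_empty, mul_zero, add_zero, abs_neg, abs_of_nonneg (by omega : (0:ℤ) ≤ n),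
    sub_neg_eq_add, ← sub_eq_add_neg (N:ℤ)]
  have hIco : Finset.Ico (-(n:ℤ)) n = insert (-(n:ℤ)) (Finset.Ioo (-(n:ℤ)) n) := by
    ext x; simp only [Finset.mem_Ico, Finset.mem_Ioo, Finset.mem_insert]; omega
  rw [alpha, hIco, Finset.sum_insert (by simp)]
  have hp2 : q ^ ((((m+d:ℕ):ℤ)+2) * (n:ℤ)^2) * psi q (m+d) d (-(n:ℤ)) = c0 q (-(n:ℤ)) * q ^ (d * (n:ℤ)) := by
    have : q ^ ((((m+d:ℕ):ℤ)+2) * (n:ℤ)^2) * q ^ (-(((m+d:ℕ):ℤ)+2) * (-(n:ℤ))^2 - d * (-(n:ℤ))) = q ^ (d * (n:ℤ)) := by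
      rw [← zpow_add₀ hq0]; congr 1; ring
    rw [psi]
    linear_combination (c0 q (-(n:ℤ))) * this
  have z1 : q ^ ((n:ℤ) - d * n) = q ^ (-(d:ℤ) * n) * q ^ (n:ℤ) := by
    rw [← zpow_add₀ hq0]; congr 1; ring
  have z2 : q ^ (-(n:ℤ) - d * (-(n:ℤ))) = q ^ ((d:ℤ) * n) * q ^ (-(n:ℤ)) := by
    rw [← zpow_add₀ hq0]; congr 1; ring
  have z3 : q ^ (-(d:ℤ) * (-(n:ℤ))) = q ^ ((d:ℤ) * n) := by
    congr 1; ring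
  rw [z1, z2, z3]
  linear_combination (-(q ^ (n:ℤ) - q ^ (-(n:ℤ))) * (ee q ((N:ℤ) - n) * ee q ((N:ℤ) + n))) * hp2

/-- chain facts -/
lemma cd_anti {q : ℂ} (hq0 : q ≠ 0) (a : ℤ) (r : ℤ) :
    (fun r => q ^ (a * (r^2 + r)) * c0 q r) (-1 - r) =
      - q ^ (2*r+1) * (fun r => q ^ (a * (r^2 + r)) * c0 q r) r := by
  simp only
  rw [c0_anti hq0, show (-1 - r)^2 + (-1 - r) = r^2 + r by ring]; ring

lemma chain0 {q : ℂ} (hq0 : q ≠ 0) (hq1 : ‖q‖ < 1) (m d : ℕ) :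
    (CC q 0)^[m] (BB q 0 (phi q m d)) = BB q 1 (fun r => q ^ (-(d:ℤ) * (r^2 + r)) * c0 q r) := by
  rw [CC_BB_iter hq0 hq1 0 (by omega), ← BB_anti hq0 hq1 _ (cd_anti hq0 _)]
  congr 1
  ext r
  have : q ^ ((m:ℤ) * (r^2 + (0:ℕ) * r)) * q ^ (-((m:ℤ) * r^2) - d * (r^2 + r)) = q ^ (-(d:ℤ) * (r^2 + r)) := by
    rw [← zpow_add₀ hq0]; congr 1; push_cast; ring
  rw [phi, ← this]; ring

lemma chain1 {q : ℂ} (hq0 : q ≠ 0) (hq1 : ‖q‖ < 1) (m d : ℕ) :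
    (CC q 1)^[d] ((CC q 0)^[m] (BB q 0 (phi q m d))) = 1 := by
  rw [chain0 hq0 hq1, CC_BB_iter hq0 hq1 1 (by omega), ← BB_c0 hq0 hq1]
  rw [BB_anti hq0 hq1 (c0 q) (c0_anti hq0)]
  congr 1
  ext r
  rw [← mul_assoc, ← zpow_add₀ hq0]
  have : (d:ℤ) * (r^2 + (1:ℕ) * r) + -(d:ℤ) * (r^2 + r) = 0 := by push_cast; ring
  rw [this]; simp

lemma chain2 {q : ℂ} (hq0 : q ≠ 0) (hq1 : ‖q‖ < 1) (m j : ℕ) :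
    (CC q 0)^[j] (CC q 1 ((CC q 0)^[m] (BB q 0 (phi q m (j+1))))) =
      BB q 0 (fun r => c0 q r * q ^ (r - ((j+1:ℕ):ℤ) * r)) := by
  rw [chain0 hq0 hq1, CC_BB hq1 1 (by omega)]
  have : (fun r : ℤ => q ^ (r^2 + (1:ℕ) * r) * (q ^ (-((j+1:ℕ):ℤ) * (r^2+r)) * c0 q r)) =
      fun r => q ^ (-(j:ℤ) * (r^2+r)) * c0 q r := by
    ext r
    rw [← mul_assoc, ← zpow_add₀ hq0]
    congr 2; push_cast; ring
  rw [this, ← BB_anti hq0 hq1 _ (cd_anti hq0 _), CC_BB_iter hq0 hq1 0 (by omega)]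
  congr 1
  ext r
  rw [← mul_assoc, ← zpow_add₀ hq0, mul_comm]
  congr 2; push_cast; ring

lemma chain2' {q : ℂ} (hq0 : q ≠ 0) (hq1 : ‖q‖ < 1) :
    BB q 0 (fun r => c0 q r * q ^ (r - ((0:ℕ):ℤ) * r)) = 1 := by
  rw [← BB_c0 hq0 hq1]
  ext n
  simp only [BB, PowerSeries.coeff_mk]
  rw [fold_sum, fold_sum]
  simp only [Nat.cast_zero, add_zero, zero_mul, sub_zero]
  have hl : ee q ((n:ℤ) + (-(n:ℤ)-1)) = 0 := ee_neg q (by omega)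
  rw [hl]
  simp only [zpow_zero, mul_one, mul_zero, add_zero]
  congr 1
  apply Finset.sum_congr rfl
  intro k _
  rw [c0_neg hq0, sub_neg_eq_add, ← sub_eq_add_neg (n:ℤ), zpow_neg]
  have := zpow_ne_zero (k:ℤ) hq0
  field_simp
  ring

/-- Main finite identity. -/
lemma finite_main {q : ℂ} (hq0 : q ≠ 0) (hq1 : ‖q‖ < 1) (m d n : ℕ) (hn : 1 ≤ n) :
    WW q m n (m+d) (fun l S => PowerSeries.coeff n (PowerSeries.X ^ l * PP q (ss m (m+d) S))) =
    ∑ k ∈ Finset.Icc 1 n, alpha q (m+d) d k * (ee q ((n:ℤ) - k) * ee q ((n:ℤ) + k)) := by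
  rw [← beta_form hq0 hq1 m d n]
  rcases d with _ | j
  · have h := W_final_eq hq1 m n (BB q 0 (phi q m 0)) (chain1 hq0 hq1 m 0)
    rw [add_zero, h, chain2' hq0 hq1, map_sub, PowerSeries.coeff_one, if_neg (by omega), sub_zero]
  · have h := W_final_gt hq1 m j n (BB q 0 (phi q m (j+1))) (chain1 hq0 hq1 m (j+1))
    rw [chain2 hq0 hq1] at h
    rw [show m + (j+1) = m + 1 + j by omega, h]


def xt {i : ℕ} (K : Fin i → ℕ) (a : ℕ) : ℕ := if h : a < i then K ⟨a, h⟩ else 0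

def prv (k : ℕ → ℕ) : ℕ → ℕ
  | 0 => 0
  | (a+1) => k a

noncomputable def stp (q : ℂ) (m i l S k : ℕ) : ℂ :=
  if l ≤ k ∧ (i = m → 1 ≤ k) then GG q (k - l) (ss m i S) else 0

noncomputable def VQ (q : ℂ) (m i : ℕ) (k : ℕ → ℕ) : ℂ :=
  ∏ a ∈ Finset.range i, (stp q m a (prv k a) (∑ b ∈ Finset.range a, k b) (k a) * q ^ ((k a)^2))

lemma xt_snoc_lt {i : ℕ} (K : Fin i → ℕ) (n a : ℕ) (h : a < i) :
    xt (Fin.snoc (α := fun _ => ℕ) K n) a = xt K a := by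
  rw [xt, dif_pos (by omega), xt, dif_pos h]
  exact Fin.snoc_castSucc (α := fun _ => ℕ) n K ⟨a, h⟩

lemma xt_snoc_last {i : ℕ} (K : Fin i → ℕ) (n : ℕ) :
    xt (Fin.snoc (α := fun _ => ℕ) K n) i = n := by
  rw [xt, dif_pos (by omega)]
  exact Fin.snoc_last (α := fun _ => ℕ) n K

lemma prv_congr {k k' : ℕ → ℕ} {i : ℕ} (h : ∀ a < i, k a = k' a) : prv k i = prv k' i := by
  rcases i with _ | i
  · rfl
  · exact h i (by omega)

lemma VQ_congr (q : ℂ) (m : ℕ) {k k' : ℕ → ℕ} {i : ℕ} (h : ∀ a < i, k a = k' a) :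
    VQ q m i k = VQ q m i k' := by
  apply Finset.prod_congr rfl
  intro a ha
  rw [Finset.mem_range] at ha
  rw [prv_congr (i := a) (k' := k') (fun b hb => h b (by omega)), h a ha,
    Finset.sum_congr rfl (fun b hb => h b (by rw [Finset.mem_range] at hb; omega))]

lemma sum_pi_succ (i M : ℕ) (F : (Fin (i+1) → ℕ) → ℂ) :
    ∑ K ∈ Fintype.piFinset (fun _ : Fin (i+1) => Finset.range (M+1)), F K =
    ∑ K ∈ Fintype.piFinset (fun _ : Fin i => Finset.range (M+1)), ∑ n ∈ Finset.range (M+1),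
      F (Fin.snoc (α := fun _ => ℕ) K n) := by
  rw [← Finset.sum_product']
  refine Finset.sum_nbij' (fun K => (fun j => K j.castSucc, K (Fin.last i)))
    (fun p => Fin.snoc (α := fun _ => ℕ) p.1 p.2) ?_ ?_ ?_ ?_ ?_
  · intro K hK
    simp only [Fintype.mem_piFinset, Finset.mem_product] at hK ⊢
    exact ⟨fun a => hK _, hK _⟩
  · intro p hp
    simp only [Fintype.mem_piFinset, Finset.mem_product] at hp ⊢
    intro a
    induction a using Fin.lastCases with
    | last => simpa using hp.2
    | cast a => simpa using hp.1 a
  · intro K _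
    exact Fin.snoc_init_self (α := fun _ => ℕ) K
  · intro p _
    ext1
    · ext a; simp
    · simp
  · intro K _
    congr 1
    exact (Fin.snoc_init_self (α := fun _ => ℕ) K).symm

lemma WW_eq (q : ℂ) (m M i : ℕ) (h : ℕ → ℕ → ℂ) :
    ∑ K ∈ Fintype.piFinset (fun _ : Fin i => Finset.range (M+1)),
      VQ q m i (xt K) * h (prv (xt K) i) (∑ b ∈ Finset.range i, xt K b) = WW q m M i h := by
  induction i generalizing h with
  | zero => simp [VQ, WW, prv]
  | succ i ih =>
    rw [sum_pi_succ, WW, ← ih]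
    apply Finset.sum_congr rfl
    intro K _
    have hf : (Finset.Icc (prv (xt K) i) M).filter (fun k => i = m → 1 ≤ k) =
        (Finset.range (M+1)).filter (fun k => prv (xt K) i ≤ k ∧ (i = m → 1 ≤ k)) := by
      ext n
      simp only [Finset.mem_filter, Finset.mem_Icc, Finset.mem_range]
      constructor
      · rintro ⟨⟨h1, h2⟩, h3⟩; exact ⟨by omega, h1, h3⟩
      · rintro ⟨h1, h2, h3⟩; exact ⟨⟨h2, by omega⟩, h3⟩
    rw [hf, Finset.sum_filter, Finset.mul_sum]
    apply Finset.sum_congr rfl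
    intro n hn
    rw [VQ, Finset.prod_range_succ, ← VQ, VQ_congr q m (fun a ha => xt_snoc_lt K n a ha),
      Finset.sum_range_succ, Finset.sum_congr rfl (fun b hb => xt_snoc_lt K n b (Finset.mem_range.1 hb)),
      prv_congr (fun a ha => xt_snoc_lt K n a ha), prv, xt_snoc_last, stp]
    split_ifs <;> ring


lemma qBinom_GG (q : ℂ) (i s : ℕ) (hs : 1 ≤ s) (n k : ℤ) (hn : n = (i:ℤ) + s - 1) (hk : k = i) :
    qBinom q n k = GG q i s := by
  subst hn hk
  rw [qBinom, if_pos (by omega), GG, ee_nat, qPoch, qPoch, Int.toNat_natCast, Finset.prod_div_distrib,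
    div_eq_mul_inv]
  congr 1
  · apply Finset.prod_congr rfl
    intro j _
    rw [← pow_add, ← zpow_natCast]
    congr 2
    push_cast; ring
  · congr 1
    apply Finset.prod_congr rfl
    intro j _
    rw [← pow_succ', ← zpow_natCast]
    push_cast; rfl

lemma chi_sum (m i : ℕ) : ∑ j ∈ Finset.range i, (if j < m then (1:ℤ) else 0) = min i m := by
  induction i with
  | zero => simp
  | succ i ih =>
    rw [Finset.sum_range_succ, ih]
    split_ifs <;> omega

lemma lower_sum (k : ℕ → ℕ) (m i : ℕ) (h : ∀ a, m ≤ a → a < i → 1 ≤ k a) :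
    i - m ≤ ∑ b ∈ Finset.range i, k b := by
  induction i with
  | zero => simp
  | succ i ih =>
    rw [Finset.sum_range_succ]
    have := ih (fun a h1 h2 => h a h1 (by omega))
    by_cases hm : m ≤ i
    · have := h i hm (by omega)
      omega
    · omega

lemma xt_castSucc {t : ℕ} (K : Fin (t+1) → ℕ) (i : Fin t) : K i.castSucc = xt K i := by
  have := i.2
  rw [xt, dif_pos (by omega)]; rfl
lemma xt_succ {t : ℕ} (K : Fin (t+1) → ℕ) (i : Fin t) : K i.succ = xt K (i+1) := by
  have := i.2
  rw [xt, dif_pos (by omega)]; rfl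
lemma xt_fin {t : ℕ} (K : Fin t → ℕ) (i : Fin t) : K i = xt K i := by
  have := i.2
  rw [xt, dif_pos (by omega)]

lemma UtProd_eq {q : ℂ} (hq1 : ‖q‖ < 1) (t m : ℕ) (hmt : m ≤ t) (K : Fin (t+1) → ℕ) :
    (if (∀ i : Fin t, K i.castSucc ≤ K i.succ) ∧ 1 ≤ K ⟨m, Nat.lt_succ_of_le hmt⟩ then UtProdM q t m K else 0) =
    VQ q m t (xt K) * stp q m t (prv (xt K) t) (∑ b ∈ Finset.range t, xt K b) (xt K t) := by
  have hm : K ⟨m, Nat.lt_succ_of_le hmt⟩ = xt K m := xt_fin K _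
  rw [VQ, Finset.prod_mul_distrib, mul_right_comm,
    ← Finset.prod_range_succ (fun a => stp q m a (prv (xt K) a) (∑ b ∈ Finset.range a, xt K b) (xt K a))]
  simp only [stp]
  rw [Finset.prod_ite_zero, hm]
  simp only [xt_castSucc, xt_succ]
  generalize hk : xt K = k
  have hiff : ((∀ i : Fin t, k i ≤ k (i+1)) ∧ 1 ≤ k m) ↔
     (∀ i ∈ Finset.range (t+1), prv k i ≤ k i ∧ (i = m → 1 ≤ k i)) := by
    constructor
    · rintro ⟨h1, h2⟩ i hi
      rw [Finset.mem_range] at hi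
      refine ⟨?_, by rintro rfl; exact h2⟩
      rcases i with _ | i
      · simp [prv]
      · exact h1 ⟨i, by omega⟩
    · intro h
      refine ⟨fun i => (h (i+1) (by simp)).1, (h m (by simp; omega)).2 rfl⟩
  by_cases hC : (∀ i : Fin t, k i ≤ k (i+1)) ∧ 1 ≤ k m
  · rw [if_pos hC, if_pos (hiff.1 hC)]
    have hmono : ∀ a, a < t → k a ≤ k (a+1) := fun a ha => hC.1 ⟨a, ha⟩
    have hge : ∀ a, m ≤ a → a ≤ t → 1 ≤ k a := by
      intro a ha
      induction a, ha using Nat.le_induction with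
      | base => intro _; exact hC.2
      | succ a ha ih => intro h; exact (ih (by omega)).trans (hmono a (by omega))
    rw [Finset.prod_range_succ', UtProdM]
    simp only [prv]
    have h0 : GG q (k 0 - 0) (ss m 0 (∑ b ∈ Finset.range 0, k b)) = 1 := by
      have : ss m 0 (∑ b ∈ Finset.range 0, k b) = 1 := by simp [ss]
      rw [this, GG_one hq1]
    rw [h0, mul_one, ← Finset.prod_mul_distrib, ← Fin.prod_univ_eq_prod_range (fun i =>
      GG q (k (i + 1) - k i) (ss m (i + 1) (∑ b ∈ Finset.range (i + 1), k b)) * q ^ k i ^ 2)]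
    apply Finset.prod_congr rfl
    intro i _
    rw [mul_comm]
    have hi := i.2
    have hsum : ∑ j ∈ Finset.univ.filter (fun j : Fin (t+1) => (j : ℕ) ≤ (i : ℕ)),
            (2 * (K j : ℤ) + if (j : ℕ) < m then 1 else 0) =
            2 * ((∑ b ∈ Finset.range (i+1), k b : ℕ):ℤ) + min ((i:ℕ)+1:ℕ) m := by
      have : ∑ j ∈ Finset.univ.filter (fun j : Fin (t+1) => (j : ℕ) ≤ (i : ℕ)),
            (2 * (K j : ℤ) + if (j : ℕ) < m then 1 else 0) =
          ∑ j ∈ Finset.range (i+1), (2 * (k j : ℤ) + if (j : ℕ) < m then 1 else 0) := by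
        refine Finset.sum_bij (fun a _ => (a:ℕ)) ?_ ?_ ?_ ?_
        · intro a ha; simp at ha ⊢; omega
        · intro a _ b _ h; exact Fin.ext h
        · intro b hb; rw [Finset.mem_range] at hb
          exact ⟨⟨b, by omega⟩, by simp; omega, rfl⟩
        · intro a _; rw [xt_fin K a, hk]
      rw [this, Finset.sum_add_distrib, chi_sum, ← Finset.mul_sum]; push_cast; rfl
    rw [xt_castSucc K, xt_succ K, hk, hsum]
    congr 1
    have h1 := lower_sum k m (i+1) (fun a h1 h2 => hge a h1 (by omega))
    have h2 := hmono i hi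
    apply qBinom_GG
    · rw [ss]; omega
    · rw [ss]; omega
    · omega
  · rw [if_neg hC, if_neg (by rwa [← hiff]), zero_mul]


lemma prod_exp_bound (f : ℕ → ℝ) (c ρ : ℝ) (h0 : 0 ≤ ρ) (h1 : ρ < 1) (hc : 0 ≤ c) (hf0 : ∀ j, 0 ≤ f j)
    (hf : ∀ j, f j ≤ 1 + c * ρ ^ j) (n : ℕ) :
    ∏ j ∈ Finset.range n, f j ≤ Real.exp (c / (1 - ρ)) := by
  calc ∏ j ∈ Finset.range n, f j ≤ ∏ j ∈ Finset.range n, Real.exp (c * ρ ^ j) := by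
        apply Finset.prod_le_prod
        · intro j _; exact hf0 j
        · intro j _
          have := Real.add_one_le_exp (c * ρ ^ j)
          linarith [hf j]
    _ = Real.exp (∑ j ∈ Finset.range n, c * ρ ^ j) := (Real.exp_sum _ _).symm
    _ ≤ _ := by
        apply Real.exp_le_exp.2
        rw [← Finset.mul_sum, div_eq_mul_inv]
        apply mul_le_mul_of_nonneg_left _ hc
        rw [← tsum_geometric_of_lt_one h0 h1]
        exact (summable_geometric_of_lt_one h0 h1).sum_le_tsum _ (fun i _ => by positivity)

lemma qPoch_bound {q : ℂ} (hq1 : ‖q‖ < 1) (R : ℝ) (a : ℂ) (ha : ‖a‖ ≤ R) (n : ℕ) :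
    ‖qPoch q a n‖ ≤ Real.exp (R / (1 - ‖q‖)) := by
  rw [qPoch, norm_prod]
  apply prod_exp_bound _ R ‖q‖ (norm_nonneg _) hq1 ((norm_nonneg a).trans ha) (fun _ => norm_nonneg _)
  intro j
  calc ‖1 - a * q ^ j‖ ≤ ‖(1:ℂ)‖ + ‖a * q ^ j‖ := norm_sub_le _ _
    _ = 1 + ‖a‖ * ‖q‖ ^ j := by simp
    _ ≤ _ := by gcongr

lemma ee_bound {q : ℂ} (hq1 : ‖q‖ < 1) (z : ℤ) :
    ‖ee q z‖ ≤ Real.exp (1 / (1 - ‖q‖) / (1 - ‖q‖)) := by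
  have h1 : 0 < 1 - ‖q‖ := by linarith
  rcases lt_or_ge z 0 with h | h
  · rw [ee_neg q h, norm_zero]; positivity
  · lift z to ℕ using h
    rw [ee_nat, qPoch, ← Finset.prod_inv_distrib, norm_prod]
    apply prod_exp_bound _ _ ‖q‖ (norm_nonneg _) hq1 (by positivity) (fun _ => norm_nonneg _)
    intro j
    have h2 : ‖q‖ ^ (j+1) ≤ ‖q‖ := by
      have := pow_le_pow_of_le_one (norm_nonneg q) hq1.le (show 1 ≤ j+1 by omega)
      simpa using this
    have h3 : 1 - ‖q‖ ^ (j+1) ≤ ‖1 - q * q ^ j‖ := by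
      have := norm_sub_norm_le (1:ℂ) (q * q ^ j)
      rw [← pow_succ']; rwa [norm_one, ← pow_succ', norm_pow] at this
    have h4 : 0 < 1 - ‖q‖ ^ (j+1) := by linarith
    rw [norm_inv]
    calc (‖1 - q * q ^ j‖)⁻¹ ≤ (1 - ‖q‖ ^ (j+1))⁻¹ := by gcongr
      _ = 1 + ‖q‖ ^ (j+1) / (1 - ‖q‖ ^ (j+1)) := by field_simp; ring
      _ ≤ 1 + ‖q‖ ^ j / (1 - ‖q‖) := by
        have : ‖q‖ ^ (j+1) ≤ ‖q‖ ^ j := pow_le_pow_of_le_one (norm_nonneg q) hq1.le (by omega)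
        gcongr
      _ = _ := by ring

lemma GG_bound {q : ℂ} (hq1 : ‖q‖ < 1) : ∃ B : ℝ, 0 ≤ B ∧ ∀ i s, ‖GG q i s‖ ≤ B := by
  refine ⟨Real.exp (1 / (1 - ‖q‖)) * Real.exp (1 / (1 - ‖q‖) / (1 - ‖q‖)), ?_, fun i s => ?_⟩
  rotate_left
  · rw [GG, norm_mul]
    exact mul_le_mul (qPoch_bound hq1 1 (q^s) (by rw [norm_pow]; exact pow_le_one₀ (norm_nonneg _) hq1.le) i)
      (ee_bound hq1 i) (norm_nonneg _) (by positivity)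
  · positivity

lemma stp_bound {q : ℂ} (hq1 : ‖q‖ < 1) : ∃ B : ℝ, 0 ≤ B ∧ ∀ m i l S k, ‖stp q m i l S k‖ ≤ B := by
  obtain ⟨B, h0, h⟩ := GG_bound hq1
  refine ⟨B, h0, fun m i l S k => ?_⟩
  rw [stp]
  split_ifs
  · exact h _ _
  · simpa using h0

lemma summable_pi_geom {ρ : ℝ} (h0 : 0 ≤ ρ) (h1 : ρ < 1) (n : ℕ) :
    Summable (fun K : Fin n → ℕ => ∏ a, ρ ^ (K a)) := by
  induction n with
  | zero => exact Summable.of_finite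
  | succ n ih =>
    rw [← (Fin.consEquiv (fun _ => ℕ)).summable_iff]
    have := (summable_geometric_of_lt_one h0 h1).mul_of_nonneg ih (fun i => by positivity)
      (fun K => Finset.prod_nonneg (fun i _ => by positivity))
    refine this.congr ?_
    intro p
    simp [Fin.prod_univ_succ, Fin.consEquiv]

noncomputable def fx (q x : ℂ) (n : ℕ) : ℂ :=
  qPoch q (x * q) (n - 1) * qPoch q (q / x) (n - 1) * q ^ n

lemma fx_bound {q : ℂ} (hq1 : ‖q‖ < 1) (x : ℂ) : ∃ B : ℝ, 0 ≤ B ∧ ∀ n, ‖fx q x n‖ ≤ B * ‖q‖ ^ n := by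
  refine ⟨Real.exp (‖x * q‖ / (1 - ‖q‖)) * Real.exp (‖q / x‖ / (1 - ‖q‖)), ?_, fun n => ?_⟩
  rotate_left
  · rw [fx, norm_mul, norm_mul, norm_pow]
    refine mul_le_mul_of_nonneg_right ?_ (by positivity)
    exact mul_le_mul (qPoch_bound hq1 _ (x*q) le_rfl _) (qPoch_bound hq1 _ (q/x) le_rfl _)
      (norm_nonneg _) (by positivity)
  · positivity

def KC (t m : ℕ) (hmt : m ≤ t) : Set (Fin (t+1) → ℕ) :=
  {k | (∀ i : Fin t, k i.castSucc ≤ k i.succ) ∧ 1 ≤ k ⟨m, Nat.lt_succ_of_le hmt⟩}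

noncomputable def FF (q x : ℂ) (t m : ℕ) (K : Fin (t+1) → ℕ) : ℂ :=
  fx q x (xt K t) * (VQ q m t (xt K) * stp q m t (prv (xt K) t) (∑ b ∈ Finset.range t, xt K b) (xt K t))

lemma FF_eq {q : ℂ} (hq1 : ‖q‖ < 1) (x : ℂ) (t m : ℕ) (hmt : m ≤ t) :
    (KC t m hmt).indicator (UtTermM q x t m) = FF q x t m := by
  ext K
  have : K (Fin.last t) = xt K t := xt_fin K _
  rw [FF, ← UtProd_eq hq1 t m hmt]
  by_cases h : (∀ i : Fin t, K i.castSucc ≤ K i.succ) ∧ 1 ≤ K ⟨m, Nat.lt_succ_of_le hmt⟩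
  · rw [if_pos h, Set.indicator_of_mem (show K ∈ KC t m hmt from h), UtTermM, fx, this]
  · rw [if_neg h, Set.indicator_of_notMem (show K ∉ KC t m hmt from h), mul_zero]

lemma FF_summable {q : ℂ} (hq1 : ‖q‖ < 1) (x : ℂ) (t m : ℕ) :
    Summable (fun K => ‖FF q x t m K‖) := by
  obtain ⟨B, hB, hb⟩ := stp_bound hq1
  obtain ⟨A, hA, ha⟩ := fx_bound hq1 x
  refine Summable.of_nonneg_of_le (fun _ => norm_nonneg _) (fun K => ?_)
    ((summable_pi_geom (norm_nonneg q) hq1 (t+1)).mul_left (A * (B^t * B)))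
  have hp : ∏ a, ‖q‖ ^ (K a) = (∏ a ∈ Finset.range t, ‖q‖ ^ (xt K a)) * ‖q‖ ^ (xt K t) := by
    rw [← Finset.prod_range_succ, ← Fin.prod_univ_eq_prod_range]
    exact Finset.prod_congr rfl (fun a _ => by rw [xt_fin K a])
  have hV : ‖VQ q m t (xt K)‖ ≤ B^t * ∏ a ∈ Finset.range t, ‖q‖ ^ (xt K a) := by
    rw [VQ, norm_prod]
    calc _ ≤ ∏ a ∈ Finset.range t, (B * ‖q‖ ^ (xt K a)) := by
          apply Finset.prod_le_prod (fun _ _ => norm_nonneg _)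
          intro a _
          rw [norm_mul, norm_pow]
          exact mul_le_mul (hb _ _ _ _ _) (pow_le_pow_of_le_one (norm_nonneg _) hq1.le
            (Nat.le_self_pow (by norm_num) _)) (by positivity) hB
      _ = _ := by rw [Finset.prod_mul_distrib]; simp
  rw [hp, FF, norm_mul, norm_mul]
  calc _ ≤ (A * ‖q‖ ^ (xt K t)) * ((B^t * ∏ a ∈ Finset.range t, ‖q‖ ^ (xt K a)) * B) := by
        refine mul_le_mul (ha _) (mul_le_mul hV (hb _ _ _ _ _) (norm_nonneg _) ?_) (by positivity) (by positivity)
        exact mul_nonneg (by positivity) (Finset.prod_nonneg (fun i _ => by positivity))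
    _ = _ := by ring

noncomputable def bet (q : ℂ) (t d n : ℕ) : ℂ :=
    ∑ k ∈ Finset.Icc 1 n, alpha q t d k * (ee q ((n:ℤ) - k) * ee q ((n:ℤ) + k))

lemma KC_le {t m : ℕ} {hmt : m ≤ t} {K : Fin (t+1) → ℕ} (h : K ∈ KC t m hmt) (a : Fin (t+1)) :
    K a ≤ K (Fin.last t) := by
  have : Monotone K := Fin.monotone_iff_le_succ.2 h.1
  exact this (Fin.le_last a)

lemma innr_sum {q : ℂ} (hq0 : q ≠ 0) (hq1 : ‖q‖ < 1) (x : ℂ) (t m : ℕ) (hmt : m ≤ t) (n : ℕ) :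
    ∑' K : Fin t → ℕ, FF q x t m (Fin.snoc (α := fun _ => ℕ) K n) = fx q x n * bet q t (t-m) n := by
  rcases Nat.eq_zero_or_pos n with rfl | hn
  · simp only [bet, ← FF_eq hq1 x t m hmt]
    rw [show Finset.Icc 1 0 = ∅ by rfl, Finset.sum_empty, mul_zero]
    convert tsum_zero with K
    apply Set.indicator_of_notMem
    intro h
    have h1 := KC_le h ⟨m, Nat.lt_succ_of_le hmt⟩
    have h2 := h.2
    rw [Fin.snoc_last] at h1
    omega
  · obtain ⟨d, rfl⟩ := Nat.exists_eq_add_of_le hmt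
    rw [Nat.add_sub_cancel_left, bet, ← finite_main hq0 hq1 m d n hn, ← WW_eq, Finset.mul_sum]
    rw [tsum_eq_sum (s := Fintype.piFinset (fun _ : Fin (m+d) => Finset.range (n+1)))]
    · apply Finset.sum_congr rfl
      intro K _
      rw [FF, xt_snoc_last, VQ_congr q m (fun a ha => xt_snoc_lt K n a ha),
        Finset.sum_congr rfl (fun b hb => xt_snoc_lt K n b (Finset.mem_range.1 hb)),
        prv_congr (fun a ha => xt_snoc_lt K n a ha), stp, coeff_X_pow_mul_ite]
      simp [PP, show 1 ≤ n from hn]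
    · intro K hK
      rw [← FF_eq hq1 x _ m hmt]
      apply Set.indicator_of_notMem
      intro h
      apply hK
      rw [Fintype.mem_piFinset]
      intro a
      have := KC_le h a.castSucc
      rw [Fin.snoc_last, Fin.snoc_castSucc] at this
      rw [Finset.mem_range]; omega

lemma multisum {q : ℂ} (hq0 : q ≠ 0) (hq1 : ‖q‖ < 1) (x : ℂ) (t m : ℕ) (hmt : m ≤ t) :
    ∑' k : KC t m hmt, UtTermM q x t m k.1 = ∑' n, fx q x n * bet q t (t-m) n := by
  rw [_root_.tsum_subtype, FF_eq hq1]
  have hs := (FF_summable hq1 x t m).of_norm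
  rw [← (Fin.snocEquiv (fun _ : Fin (t+1) => ℕ)).tsum_eq]
  have hs' := (Fin.snocEquiv (fun _ : Fin (t+1) => ℕ)).summable_iff.2 hs
  refine hs'.tsum_prod.trans ?_
  congr 1
  ext n
  rw [← innr_sum hq0 hq1 x t m hmt n]
  rfl

lemma multisum_summable {q : ℂ} (hq1 : ‖q‖ < 1) (x : ℂ) (t m : ℕ) (hmt : m ≤ t) :
    Summable (fun k : KC t m hmt => ‖UtTermM q x t m k.1‖) := by
  have hs := (FF_summable hq1 x t m).comp_injective (i := fun k : KC t m hmt => k.1)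
    Subtype.val_injective
  refine hs.congr ?_
  intro k
  simp only [Function.comp]
  rw [← FF_eq hq1 x t m hmt, Set.indicator_of_mem k.2]


lemma qPoch_tendsto {q : ℂ} (hq1 : ‖q‖ < 1) (a : ℂ) :
    Filter.Tendsto (fun n => qPoch q a n) Filter.atTop (nhds (qPochInf q a)) := by
  have h : Multipliable (fun j : ℕ => 1 - a * q ^ j) := by
    simp only [sub_eq_add_neg]
    apply multipliable_one_add_of_summable
    simp only [norm_neg, norm_mul, norm_pow]
    exact (summable_geometric_of_lt_one (norm_nonneg q) hq1).mul_left _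
  exact h.tendsto_prod_tprod_nat

lemma qPochInf_ne {q : ℂ} (hq1 : ‖q‖ < 1) : qPochInf q q ≠ 0 := by
  rw [qPochInf]
  simp only [sub_eq_add_neg]
  apply tprod_one_add_ne_zero_of_summable
  · intro i
    have := one_sub_qmul_ne hq1 i
    rwa [sub_eq_add_neg] at this
  · simp only [norm_neg, norm_mul, norm_pow]
    exact (summable_geometric_of_lt_one (norm_nonneg q) hq1).mul_left _

lemma ee_tendsto {q : ℂ} (hq1 : ‖q‖ < 1) (c : ℤ) :
    Filter.Tendsto (fun n : ℕ => ee q ((n:ℤ) + c)) Filter.atTop (nhds (qPochInf q q)⁻¹) := by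
  have h := ((qPoch_tendsto hq1 q).inv₀ (qPochInf_ne hq1))
  have h2 : Filter.Tendsto (fun n : ℕ => ((n:ℤ) + c).toNat) Filter.atTop Filter.atTop := by
    rw [Filter.tendsto_atTop]
    intro b
    filter_upwards [Filter.eventually_ge_atTop (b + c.natAbs)] with n hn
    omega
  refine (h.comp h2).congr' ?_
  filter_upwards [Filter.eventually_ge_atTop c.natAbs] with n hn
  simp only [Function.comp]
  rw [← ee_nat, Int.toNat_of_nonneg (by omega)]

lemma gauss_finite {q x : ℂ} (hq0 : q ≠ 0) (hq1 : ‖q‖ < 1) (hx : x ≠ 0) (n : ℕ) (hn : 1 ≤ n)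
    (h1 : 1 - x * q ^ n ≠ 0) (h2 : 1 - q ^ n / x ≠ 0) (N : ℕ) :
    ∑ k ∈ Finset.range (N+1), fx q x k * (ee q ((k:ℤ) - n) * ee q ((k:ℤ) + n)) =
    qPoch q (x*q) N * qPoch q (q/x) N * (ee q ((N:ℤ) - n) * ee q ((N:ℤ) + n)) *
      (q ^ n / ((1 - x * q ^ n) * (1 - q ^ n / x))) := by
  induction N with
  | zero =>
    have : ee q (((0:ℕ):ℤ) - n) = 0 := ee_neg q (by omega)
    simp only [zero_add, Finset.range_one, Finset.sum_singleton, this]; ring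
  | succ N ih =>
    rw [Finset.sum_range_succ, ih]
    have e1 := ee_rec hq1 (((N+1:ℕ):ℤ) - n)
    have e2 := ee_rec hq1 (((N+1:ℕ):ℤ) + n)
    rw [show ((N+1:ℕ):ℤ) - n - 1 = N - n by push_cast; ring] at e1
    rw [show ((N+1:ℕ):ℤ) + n - 1 = N + n by push_cast; ring] at e2
    rw [e1, e2, fx, Nat.add_sub_cancel]
    have p1 : qPoch q (x*q) (N+1) = qPoch q (x*q) N * (1 - x * q ^ (N+1)) := by
      rw [qPoch, Finset.prod_range_succ, ← qPoch]; ring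
    have p2 : qPoch q (q/x) (N+1) = qPoch q (q/x) N * (1 - q ^ (N+1) / x) := by
      rw [qPoch, Finset.prod_range_succ, ← qPoch]; ring
    rw [p1, p2, zpow_sub₀ hq0, zpow_add₀ hq0, zpow_natCast, zpow_natCast]
    have hqn := pow_ne_zero n hq0
    have h2' : x - q ^ n ≠ 0 := by
      intro h; apply h2; field_simp; simpa using h
    generalize ee q (((N+1:ℕ):ℤ) - n) = E1
    generalize ee q (((N+1:ℕ):ℤ) + n) = E2
    generalize qPoch q (x*q) N = A
    generalize qPoch q (q/x) N = B
    generalize q ^ (N+1) = Q at *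
    generalize q ^ n = u at *
    have : (1 - x * u) * (1 - u / x) = (1 - x * u) * (x - u) / x := by field_simp
    rw [this]
    have h1' : 1 - u * x ≠ 0 := by rwa [mul_comm]
    field_simp
    ring

lemma gauss_summable {q : ℂ} (hq1 : ‖q‖ < 1) (x : ℂ) (n : ℤ) :
    Summable (fun k : ℕ => fx q x k * (ee q ((k:ℤ) - n) * ee q ((k:ℤ) + n))) := by
  obtain ⟨A, hA, ha⟩ := fx_bound hq1 x
  set E := Real.exp (1 / (1 - ‖q‖) / (1 - ‖q‖))
  apply Summable.of_norm_bounded (g := fun k => (A * (E * E)) * ‖q‖ ^ k)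
    ((summable_geometric_of_lt_one (norm_nonneg q) hq1).mul_left _)
  intro k
  rw [norm_mul, norm_mul]
  calc _ ≤ (A * ‖q‖ ^ k) * (E * E) := by
        refine mul_le_mul (ha k) (mul_le_mul (ee_bound hq1 _) (ee_bound hq1 _) (norm_nonneg _) (by positivity))
          (by positivity) (by positivity)
    _ = _ := by ring

lemma gauss {q x : ℂ} (hq0 : q ≠ 0) (hq1 : ‖q‖ < 1) (hx : x ≠ 0) (n : ℕ) (hn : 1 ≤ n)
    (h1 : 1 - x * q ^ n ≠ 0) (h2 : 1 - q ^ n / x ≠ 0) :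
    ∑' k : ℕ, fx q x k * (ee q ((k:ℤ) - n) * ee q ((k:ℤ) + n)) =
    (qPochInf q (x * q) * qPochInf q (q / x) / (qPochInf q q) ^ 2) *
      (q ^ n / ((1 - x * q ^ n) * (1 - q ^ n / x))) := by
  have hs := (gauss_summable hq1 x n).hasSum.tendsto_sum_nat
  have hs1 := hs.comp (Filter.tendsto_add_atTop_nat 1)
  refine tendsto_nhds_unique hs1 ?_
  have hl := ((((qPoch_tendsto hq1 (x*q)).mul (qPoch_tendsto hq1 (q/x))).mul
    ((ee_tendsto hq1 (-n)).mul (ee_tendsto hq1 n)))).mul_const (q ^ n / ((1 - x * q ^ n) * (1 - q ^ n / x)))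
  convert hl using 2 with N
  · exact gauss_finite hq0 hq1 hx n hn h1 h2 N
  · rw [pow_two, div_eq_mul_inv, mul_inv]

noncomputable def SN (q : ℂ) (t d : ℕ) (n : ℤ) : ℂ :=
  q ^ (((t:ℤ)+2)*n^2) * ∑ r ∈ Finset.Ico (-n) n, psi q t d r

lemma psi_bound {q : ℂ} (hq0 : q ≠ 0) (hq1 : ‖q‖ < 1) (t d : ℕ) (hd : d ≤ t) (n j : ℤ)
    (h1 : -n ≤ j) (h2 : j < n) :
    ‖q ^ (((t:ℤ)+2)*n^2) * psi q t d j‖ ≤ ‖q‖ ^ (3 * n - 3) := by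
  rw [psi, c0]
  have hp : 0 < ‖q‖ := norm_pos_iff.2 hq0
  rw [norm_mul, norm_mul, norm_mul, norm_zpow, norm_zpow, norm_zpow, norm_zpow, norm_neg, norm_one, one_zpow, one_mul,
    ← zpow_add₀ hp.ne', ← zpow_add₀ hp.ne']
  apply zpow_le_zpow_right_of_le_one₀ hp hq1.le
  obtain ⟨c, hc, hdiv⟩ := tri_ex j
  rw [hdiv]
  have hd' : (d:ℤ) ≤ t := by exact_mod_cast hd
  have hd0 : (0:ℤ) ≤ d := by positivity
  have a1 : 0 ≤ (2*(t:ℤ)+3) * ((j+n)*(n-1-j)) := by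
    apply mul_nonneg (by positivity)
    apply mul_nonneg <;> omega
  have a2 : 0 ≤ (2*(t:ℤ)+2)*(n+j) - 2*d*j := by
    rcases le_or_gt j 0 with h | h
    · nlinarith [mul_nonneg hd0 (neg_nonneg.2 h)]
    · nlinarith [mul_nonneg (sub_nonneg.2 hd') h.le]
  have a3 : 0 ≤ (n-2)*(n-3) := by
    rcases le_or_gt n 2 with h | h
    · nlinarith
    · nlinarith
  nlinarith

lemma SN_bound {q : ℂ} (hq0 : q ≠ 0) (hq1 : ‖q‖ < 1) (t d : ℕ) (hd : d ≤ t) (n : ℕ) :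
    ‖SN q t d n‖ ≤ 2 * n * ‖q‖ ^ (3 * (n:ℤ) - 3) := by
  rw [SN, Finset.mul_sum]
  refine (norm_sum_le _ _).trans ?_
  refine (Finset.sum_le_card_nsmul _ _ (‖q‖ ^ (3 * (n:ℤ) - 3)) ?_).trans ?_
  · intro r hr
    rw [Finset.mem_Ico] at hr
    exact psi_bound hq0 hq1 t d hd n r hr.1 hr.2
  · rw [Int.card_Ico, nsmul_eq_mul]
    have : ((n:ℤ) - -n).toNat = 2 * n := by omega
    rw [this]; push_cast; rfl

lemma alpha_SN (q : ℂ) (t d : ℕ) (n : ℤ) : alpha q t d n = SN q t d n * (q ^ n - q ^ (-n)) := by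
  rw [alpha, SN]; ring

lemma alpha_summable {q : ℂ} (hq0 : q ≠ 0) (hq1 : ‖q‖ < 1) (t d : ℕ) (hd : d ≤ t) :
    Summable (fun j : ℕ => ‖alpha q t d ((j+1:ℕ):ℤ)‖) := by
  have hp : 0 < ‖q‖ := norm_pos_iff.2 hq0
  have hs := summable_pow_mul_geometric_of_norm_lt_one 1 (r := ‖q‖) (by rwa [norm_norm])
  have hs1 := ((summable_nat_add_iff 1).2 hs).mul_left (4 * ‖q‖ ^ (-3:ℤ))
  refine Summable.of_nonneg_of_le (fun _ => norm_nonneg _) (fun j => ?_) hs1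
  rw [alpha_SN, norm_mul]
  generalize j + 1 = n
  have b1 := SN_bound hq0 hq1 t d hd n
  have b2 : ‖q ^ (n:ℤ) - q ^ (-(n:ℤ))‖ ≤ 2 * ‖q‖ ^ (-(n:ℤ)) := by
    refine (norm_sub_le _ _).trans ?_
    rw [norm_zpow, norm_zpow]
    have : ‖q‖ ^ (n:ℤ) ≤ ‖q‖ ^ (-(n:ℤ)) := zpow_le_zpow_right_of_le_one₀ hp hq1.le (by omega)
    linarith
  calc _ ≤ (2 * n * ‖q‖ ^ (3 * (n:ℤ) - 3)) * (2 * ‖q‖ ^ (-(n:ℤ))) := by gcongr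
    _ = 4 * n * ‖q‖ ^ (2 * (n:ℤ) - 3) := by
      rw [show 2 * (n:ℤ) - 3 = (3 * (n:ℤ) - 3) + (-(n:ℤ)) by ring, zpow_add₀ hp.ne']; ring
    _ ≤ 4 * n * ‖q‖ ^ (-3 + (n:ℤ)) := by
      gcongr 4 * n * ?_
      apply zpow_le_zpow_right_of_le_one₀ hp hq1.le; omega
    _ = _ := by rw [zpow_add₀ hp.ne', zpow_natCast, pow_one]; ring

lemma interchange {q x : ℂ} (hq0 : q ≠ 0) (hq1 : ‖q‖ < 1) (t d : ℕ) (hd : d ≤ t) :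
    ∑' n, fx q x n * bet q t d n = ∑' j : ℕ, alpha q t d ((j+1:ℕ):ℤ) *
      ∑' k : ℕ, fx q x k * (ee q ((k:ℤ) - (j+1:ℕ)) * ee q ((k:ℤ) + (j+1:ℕ))) := by
  obtain ⟨A, hA, ha⟩ := fx_bound hq1 x
  set E := Real.exp (1 / (1 - ‖q‖) / (1 - ‖q‖))
  set G : ℕ → ℕ → ℂ := fun n j => alpha q t d ((j+1:ℕ):ℤ) *
    (fx q x n * (ee q ((n:ℤ) - (j+1:ℕ)) * ee q ((n:ℤ) + (j+1:ℕ)))) with hG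
  have hsum : Summable (Function.uncurry G) := by
    have := ((alpha_summable hq0 hq1 t d hd).mul_of_nonneg
      (((summable_geometric_of_lt_one (norm_nonneg q) hq1).mul_left (A * (E * E)))) (fun _ => norm_nonneg _)
      (fun _ => by positivity))
    have := (Equiv.prodComm ℕ ℕ).summable_iff.2 this
    refine Summable.of_norm_bounded this ?_
    rintro ⟨n, j⟩
    simp only [Function.uncurry, hG, Function.comp, Equiv.prodComm_apply, Prod.fst_swap, Prod.snd_swap]
    rw [norm_mul, norm_mul, norm_mul]
    refine mul_le_mul_of_nonneg_left ?_ (norm_nonneg _)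
    calc _ ≤ (A * ‖q‖ ^ n) * (E * E) := by
          refine mul_le_mul (ha n) (mul_le_mul (ee_bound hq1 _) (ee_bound hq1 _) (norm_nonneg _) (by positivity))
            (by positivity) (by positivity)
      _ = _ := by ring
  have h1 : ∀ n, fx q x n * bet q t d n = ∑' j, G n j := by
    intro n
    rw [tsum_eq_sum (s := Finset.range n), bet, Finset.mul_sum, Finset.range_eq_Ico,
      Finset.sum_Ico_add' (fun j => alpha q t d (j:ℕ) * (fx q x n * (ee q ((n:ℤ) - (j:ℕ)) * ee q ((n:ℤ) + (j:ℕ))))) 0 n 1]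
    · have : Finset.Ico (0+1) (n+1) = Finset.Icc 1 n := by ext; simp
      rw [this]
      apply Finset.sum_congr rfl
      intro k _; ring
    · intro j hj
      rw [Finset.mem_range] at hj
      simp only [hG]
      rw [ee_neg q (show (n:ℤ) - (j+1:ℕ) < 0 by omega)]; ring
  simp only [h1]
  rw [← hsum.tsum_comm]
  congr 1
  ext j
  rw [← tsum_mul_left]


abbrev SigT := (Σ N : ℕ, {j : ℤ // j ∈ Finset.Ico (-((N+1:ℕ):ℤ)) ((N+1:ℕ):ℤ)})

lemma sigT_ext {a b : SigT} (h1 : a.1 = b.1) (h2 : a.2.1 = b.2.1) : a = b := by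
  obtain ⟨N, j, hj⟩ := a
  obtain ⟨N', j', hj'⟩ := b
  simp only at h1 h2
  subst h1 h2
  rfl

def posE : SigT ≃ {p : ℤ × ℤ // (0 ≤ p.1 ∧ 0 ≤ p.2) ∧ p.1 % 2 ≠ p.2 % 2} where
  toFun a := ⟨((a.1:ℤ) + 1 + a.2.1, (a.1:ℤ) - a.2.1), by
    have := a.2.2
    rw [Finset.mem_Ico] at this
    push_cast at this
    refine ⟨⟨?_, ?_⟩, ?_⟩ <;> simp only <;> omega⟩
  invFun p := ⟨((p.1.1 + p.1.2 - 1) / 2).toNat, ⟨(p.1.1 - p.1.2 - 1) / 2, by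
    have := p.2
    rw [Finset.mem_Ico]
    omega⟩⟩
  left_inv a := by
    apply sigT_ext <;> simp only <;> omega
  right_inv p := by
    obtain ⟨⟨r, s⟩, hp⟩ := p
    simp only at hp
    apply Subtype.ext
    simp only [Prod.mk.injEq]
    omega

def negE : SigT ≃ {p : ℤ × ℤ // (p.1 < 0 ∧ p.2 < 0) ∧ p.1 % 2 ≠ p.2 % 2} where
  toFun a := ⟨(-(a.1:ℤ) - 1 + a.2.1, -(a.1:ℤ) - 2 - a.2.1), by
    have := a.2.2
    rw [Finset.mem_Ico] at this
    push_cast at this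
    refine ⟨⟨?_, ?_⟩, ?_⟩ <;> simp only <;> omega⟩
  invFun p := ⟨((-p.1.1 - p.1.2 - 3) / 2).toNat, ⟨(p.1.1 - p.1.2 - 1) / 2, by
    have := p.2
    rw [Finset.mem_Ico]
    omega⟩⟩
  left_inv a := by
    apply sigT_ext <;> simp only <;> omega
  right_inv p := by
    obtain ⟨⟨r, s⟩, hp⟩ := p
    simp only at hp
    apply Subtype.ext
    simp only [Prod.mk.injEq]
    omega

lemma hecke_pos {q : ℂ} (hq0 : q ≠ 0) (x : ℂ) (t m : ℕ) (hmt : m ≤ t) (a : SigT) :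
    heckeTermM q x ((t:ℤ)+1) ((m:ℤ)+1) (posE a).1 = q ^ (-(t:ℤ)-1) *
      (q ^ (((t:ℤ)+2)*((a.1+1:ℕ):ℤ)^2) * psi q t (t-m) a.2.1) * (1 - x * q ^ (((a.1+1:ℕ):ℤ)))⁻¹ := by
  obtain ⟨N, j, hj⟩ := a
  obtain ⟨c, hc, hdiv⟩ := tri_ex j
  simp only [heckeTermM, posE, Equiv.coe_fn_mk, psi, c0, hdiv]
  have e1 : ((N:ℤ) + 1 + j - (N - j) - 1) / 2 = j := by omega
  have e2 : ((N:ℤ) + 1 + j + (N - j) + 1) / 2 = ((N+1:ℕ):ℤ) := by push_cast; omega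
  rw [e1, e2, div_eq_mul_inv]
  congr 1
  have hE : ∀ E : ℤ, E = 8 * ((-(t:ℤ)-1) + ((t:ℤ)+2)*((N+1:ℕ):ℤ)^2 + c + (-((t:ℤ)+2) * j^2 - ((t-m:ℕ):ℤ) * j)) →
     q ^ (E / 8) = q ^ (-(t:ℤ)-1) * q ^ (((t:ℤ)+2)*((N+1:ℕ):ℤ)^2) * q ^ c * q ^ (-((t:ℤ)+2) * j^2 - ((t-m:ℕ):ℤ) * j) := by
    intro E h
    rw [h, Int.mul_ediv_cancel_left _ (by norm_num), zpow_add₀ hq0, zpow_add₀ hq0, zpow_add₀ hq0]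
  rw [hE]
  · ring
  · push_cast [Nat.cast_sub hmt]
    linear_combination 4 * hc

lemma hecke_neg {q : ℂ} (hq0 : q ≠ 0) (x : ℂ) (t m : ℕ) (hmt : m ≤ t) (a : SigT) :
    heckeTermM q x ((t:ℤ)+1) ((m:ℤ)+1) (negE a).1 = q ^ (-(t:ℤ)-1) *
      (q ^ (((t:ℤ)+2)*((a.1+1:ℕ):ℤ)^2) * psi q t (t-m) a.2.1) * (1 - x * q ^ (-((a.1+1:ℕ):ℤ)))⁻¹ := by
  obtain ⟨N, j, hj⟩ := a
  obtain ⟨c, hc, hdiv⟩ := tri_ex j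
  simp only [heckeTermM, negE, Equiv.coe_fn_mk, psi, c0, hdiv]
  have e1 : (-(N:ℤ) - 1 + j - (-N - 2 - j) - 1) / 2 = j := by omega
  have e2 : (-(N:ℤ) - 1 + j + (-N - 2 - j) + 1) / 2 = -((N+1:ℕ):ℤ) := by push_cast; omega
  rw [e1, e2, div_eq_mul_inv]
  congr 1
  have hE : ∀ E : ℤ, E = 8 * ((-(t:ℤ)-1) + ((t:ℤ)+2)*((N+1:ℕ):ℤ)^2 + c + (-((t:ℤ)+2) * j^2 - ((t-m:ℕ):ℤ) * j)) →
     q ^ (E / 8) = q ^ (-(t:ℤ)-1) * q ^ (((t:ℤ)+2)*((N+1:ℕ):ℤ)^2) * q ^ c * q ^ (-((t:ℤ)+2) * j^2 - ((t-m:ℕ):ℤ) * j) := by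
    intro E h
    rw [h, Int.mul_ediv_cancel_left _ (by norm_num), zpow_add₀ hq0, zpow_add₀ hq0, zpow_add₀ hq0]
  rw [hE]
  · ring
  · push_cast [Nat.cast_sub hmt]
    linear_combination 4 * hc

lemma sig_sum {q : ℂ} (hq0 : q ≠ 0) (hq1 : ‖q‖ < 1) (t d : ℕ) (hd : d ≤ t) (w : ℂ) (g : ℕ → ℂ)
    (hg : Bornology.IsBounded (Set.range g)) :
    Summable (fun a : SigT => ‖w * (q ^ (((t:ℤ)+2)*((a.1+1:ℕ):ℤ)^2) * psi q t d a.2.1) * g a.1‖) ∧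
    Summable (fun N : ℕ => w * SN q t d ((N+1:ℕ):ℤ) * g N) ∧
    ∑' a : SigT, w * (q ^ (((t:ℤ)+2)*((a.1+1:ℕ):ℤ)^2) * psi q t d a.2.1) * g a.1 =
      ∑' N : ℕ, w * SN q t d ((N+1:ℕ):ℤ) * g N := by
  obtain ⟨B, hB⟩ := hg.exists_norm_le
  have hB' : ∀ N, ‖g N‖ ≤ B := fun N => hB _ ⟨N, rfl⟩
  have hB0 : 0 ≤ B := (norm_nonneg _).trans (hB' 0)
  have hp : 0 < ‖q‖ := norm_pos_iff.2 hq0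
  have hs := summable_pow_mul_geometric_of_norm_lt_one 1 (r := ‖q‖) (by rwa [norm_norm])
  have hs1 := ((summable_nat_add_iff 1).2 hs).mul_left (2 * ‖w‖ * B * ‖q‖ ^ (-3:ℤ))
  have hexp : ∀ n : ℕ, ‖q‖ ^ (3 * (n:ℤ) - 3) ≤ ‖q‖ ^ (-3:ℤ) * ‖q‖ ^ n := by
    intro n
    rw [← zpow_natCast, ← zpow_add₀ hp.ne']
    apply zpow_le_zpow_right_of_le_one₀ hp hq1.le; omega
  have h1 : Summable (fun a : SigT => ‖w * (q ^ (((t:ℤ)+2)*((a.1+1:ℕ):ℤ)^2) * psi q t d a.2.1) * g a.1‖) := by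
    rw [summable_sigma_of_nonneg (fun _ => norm_nonneg _)]
    refine ⟨fun N => Summable.of_finite, ?_⟩
    refine Summable.of_nonneg_of_le (fun _ => tsum_nonneg (fun _ => norm_nonneg _)) (fun N => ?_) hs1
    simp only
    rw [Finset.tsum_subtype (Finset.Ico (-((N+1:ℕ):ℤ)) ((N+1:ℕ):ℤ))
      (fun j => ‖w * (q ^ (((t:ℤ)+2)*((N+1:ℕ):ℤ)^2) * psi q t d j) * g N‖)]
    refine (Finset.sum_le_card_nsmul _ _ (‖w‖ * (‖q‖ ^ (-3:ℤ) * ‖q‖ ^ (N+1)) * B) ?_).trans ?_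
    · intro r hr
      rw [Finset.mem_Ico] at hr
      rw [norm_mul, norm_mul]
      have := (psi_bound hq0 hq1 t d hd _ r hr.1 hr.2).trans (hexp (N+1))
      have := hB' N
      gcongr
    · rw [Int.card_Ico, nsmul_eq_mul]
      have : (((N+1:ℕ):ℤ) - -((N+1:ℕ):ℤ)).toNat = 2 * (N+1) := by omega
      rw [this]; push_cast; apply le_of_eq; ring
  have hin : ∀ N : ℕ, ∑' j : {j : ℤ // j ∈ Finset.Ico (-((N+1:ℕ):ℤ)) ((N+1:ℕ):ℤ)},
      w * (q ^ (((t:ℤ)+2)*((N+1:ℕ):ℤ)^2) * psi q t d j.1) * g N = w * SN q t d ((N+1:ℕ):ℤ) * g N := by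
    intro N
    rw [Finset.tsum_subtype (Finset.Ico (-((N+1:ℕ):ℤ)) ((N+1:ℕ):ℤ))
      (fun j => w * (q ^ (((t:ℤ)+2)*((N+1:ℕ):ℤ)^2) * psi q t d j) * g N), SN, Finset.mul_sum, Finset.mul_sum,
      Finset.sum_mul]
  refine ⟨h1, ?_, ?_⟩
  · have := h1.of_norm.sigma
    simpa only [hin] using this
  · rw [h1.of_norm.tsum_sigma]
    simp only [hin]

lemma g_pos {q x : ℂ} (hq1 : ‖q‖ < 1)  :
    Bornology.IsBounded (Set.range (fun N : ℕ => (1 - x * q ^ (((N+1:ℕ):ℤ)))⁻¹)) := by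
  apply Metric.isBounded_range_of_tendsto _ (x := ((1:ℂ) - x * 0)⁻¹)
  apply Filter.Tendsto.inv₀ _ (by simp)
  apply Filter.Tendsto.const_sub
  apply Filter.Tendsto.const_mul
  simp only [zpow_natCast]
  exact (tendsto_pow_atTop_nhds_zero_of_norm_lt_one hq1).comp (Filter.tendsto_add_atTop_nat 1)

lemma g_neg {q x : ℂ} (hq0 : q ≠ 0) (hq1 : ‖q‖ < 1) (hx : x ≠ 0) :
    Bornology.IsBounded (Set.range (fun N : ℕ => (1 - x * q ^ (-((N+1:ℕ):ℤ)))⁻¹)) := by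
  have h0 : Filter.Tendsto (fun N : ℕ => q ^ (N+1)) Filter.atTop (nhds 0) :=
    (tendsto_pow_atTop_nhds_zero_of_norm_lt_one hq1).comp (Filter.tendsto_add_atTop_nat 1)
  apply Metric.isBounded_range_of_tendsto _ (x := 0 * (0 - x)⁻¹)
  have := h0.mul ((h0.sub_const x).inv₀ (by simpa using hx))
  refine this.congr ?_
  intro N
  rw [zpow_neg, zpow_natCast]
  have := pow_ne_zero (N+1) hq0
  have e : 1 - x * (q ^ (N+1))⁻¹ = (q ^ (N+1) - x) / q ^ (N+1) := by field_simp
  rw [e, inv_div]; rfl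

theorem stmt15 (t m : ℕ) (hmt : m ≤ t) (q x : ℂ)
    (hq0 : 0 < ‖q‖) (hq1 : ‖q‖ < 1)
    (hx : x ≠ 0) (hxq : ∀ n : ℤ, n ≠ 0 → x * q ^ n ≠ 1) :
    Summable (fun k : {k : Fin (t+1) → ℕ //
        (∀ i : Fin t, k i.castSucc ≤ k i.succ) ∧ 1 ≤ k ⟨m, by omega⟩} =>
      ‖UtTermM q x t m k.1‖) ∧
    Summable (fun p : {p : ℤ × ℤ // (0 ≤ p.1 ∧ 0 ≤ p.2) ∧ p.1 % 2 ≠ p.2 % 2} =>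
      ‖heckeTermM q x ((t : ℤ) + 1) ((m : ℤ) + 1) p.1‖) ∧
    Summable (fun p : {p : ℤ × ℤ // (p.1 < 0 ∧ p.2 < 0) ∧ p.1 % 2 ≠ p.2 % 2} =>
      ‖heckeTermM q x ((t : ℤ) + 1) ((m : ℤ) + 1) p.1‖) ∧
    q ^ (-(t : ℤ) - 1) *
      ∑' k : {k : Fin (t+1) → ℕ //
          (∀ i : Fin t, k i.castSucc ≤ k i.succ) ∧ 1 ≤ k ⟨m, by omega⟩},
        UtTermM q x t m k.1 =
    -(qPochInf q (x * q) * qPochInf q (q / x) / (qPochInf q q) ^ 2) *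
      ((∑' p : {p : ℤ × ℤ // (0 ≤ p.1 ∧ 0 ≤ p.2) ∧ p.1 % 2 ≠ p.2 % 2},
          heckeTermM q x ((t : ℤ) + 1) ((m : ℤ) + 1) p.1) -
       (∑' p : {p : ℤ × ℤ // (p.1 < 0 ∧ p.2 < 0) ∧ p.1 % 2 ≠ p.2 % 2},
          heckeTermM q x ((t : ℤ) + 1) ((m : ℤ) + 1) p.1)) := by
  have hq : q ≠ 0 := norm_pos_iff.1 hq0
  obtain ⟨p1, p2, p3⟩ := sig_sum hq hq1 t (t-m) (by omega) (q ^ (-(t:ℤ)-1)) _ (g_pos (x := x) hq1)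
  obtain ⟨n1, n2, n3⟩ := sig_sum hq hq1 t (t-m) (by omega) (q ^ (-(t:ℤ)-1)) _ (g_neg hq hq1 hx)
  refine ⟨multisum_summable hq1 x t m hmt, ?_, ?_, ?_⟩
  · rw [← posE.summable_iff]
    refine p1.congr (fun a => ?_)
    rw [Function.comp, hecke_pos hq x t m hmt]
  · rw [← negE.summable_iff]
    refine n1.congr (fun a => ?_)
    rw [Function.comp, hecke_neg hq x t m hmt]
  · have hU := multisum hq hq1 x t m hmt
    refine (congrArg (fun z => q ^ (-(t : ℤ) - 1) * z) hU).trans ?_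
    rw [interchange hq hq1 t (t-m) (by omega), ← posE.tsum_eq, ← negE.tsum_eq]
    simp only [hecke_pos hq x t m hmt, hecke_neg hq x t m hmt]
    rw [p3, n3, ← p2.tsum_sub n2, ← tsum_mul_left, ← tsum_mul_left]
    congr 1
    ext N
    have h1 : 1 - x * q ^ (N+1) ≠ 0 := by
      have := hxq ((N+1:ℕ):ℤ) (by omega)
      rw [zpow_natCast] at this
      exact sub_ne_zero.2 this.symm
    have h2' : q ^ (N+1) - x ≠ 0 := by
      have := hxq (-((N+1:ℕ):ℤ)) (by omega)
      rw [zpow_neg, zpow_natCast] at this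
      intro h
      apply this
      rw [← sub_eq_zero.1 h]
      exact mul_inv_cancel₀ (pow_ne_zero _ hq)
    have hu := pow_ne_zero (N+1) hq
    have h2 : 1 - q ^ (N+1) / x ≠ 0 := by
      intro h
      apply h2'
      field_simp at h
      linear_combination -h
    rw [gauss hq hq1 hx (N+1) (by omega) h1 h2, alpha_SN, zpow_neg q ((N+1:ℕ):ℤ), zpow_natCast]
    generalize q ^ (N+1) = u at *
    generalize qPochInf q (x * q) * qPochInf q (q / x) / (qPochInf q q) ^ 2 = P
    have e : (u - u⁻¹) * (u / ((1 - x * u) * (1 - u / x))) = -((1 - x * u)⁻¹ - (1 - x * u⁻¹)⁻¹) := by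
      have a1 : 1 - u / x = -(u - x) / x := by field_simp; ring
      have a2 : 1 - x * u⁻¹ = (u - x) / u := by field_simp
      have h1' : 1 - u * x ≠ 0 := by rwa [mul_comm]
      rw [a1, a2]
      field_simp
      ring
    linear_combination (q ^ (-(t:ℤ)-1) * SN q t (t-m) ((N+1:ℕ):ℤ) * P) * e
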